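/- arXiv:2306.12682 — 2 statements merged into one kernel-verified Lean document; each statement's English description precedes it below -/
import Mathlib

section
/- For all n ≥ 3, the number of permutations of [n] containing exactly one occurrence of the pattern 132 equals (2n-3)!/(n!·(n-3)!). -/
/-!
Write a permutation of `Fin (n + 1)` as a first value `p` followed by a relabelled copy of a
permutation `σ` of `Fin n` (`consPerm`). The occurrences of `132` that use the leading `p` correspond
to the inversions of `σ` among the values `≥ p`, whose number is `invAbove σ p` (`occ_consPerm`).
The statistic `invAbove` itself obeys an explicit rule under prepending (`invAbove_consPerm`), so
counting permutations by `occ` together with the set of zeros of `invAbove` gives closed recurrences.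

For avoiders, with `A n q` the number of those with `invAbove σ q = 0`, this is the ballot recurrence
`A (n + 1) q = ∑ p ≤ q, A n p` for `q ≤ n` (`numAvoid_succ`). For permutations with one occurrence the sole
occurrence is either already in `σ`, or created by `p`; in the latter case `σ` avoids `132` and has
exactly one inversion above `p`, which forces `σ` to start with `p + 1` (`single_inv_iff`). Hence, with
`U` the analogous count, `U (n + 2) q = ∑ p ≤ q, U (n + 1) p + ∑ p ≤ q - 2, A n p` for `q ≤ n + 1`
(`numOne_succ`). The closed forms `numAvoid_formula` and `numOne_formula` follow by a double induction
on these Pascal-type recurrences, and `invAbove σ (n - 1) = 0` always, so that the required count is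
`U n (n - 1)`.
-/

/-- The number of occurrences of the pattern `τ` (a permutation of `Fin k`) in the
permutation `π` of `Fin n`. -/
noncomputable def numOcc {k n : ℕ} (τ : Equiv.Perm (Fin k)) (π : Equiv.Perm (Fin n)) : ℕ :=
  Nat.card {f : Fin k → Fin n // StrictMono f ∧ ∀ a b : Fin k, π (f a) < π (f b) ↔ τ a < τ b}

open Finset

/-! ### Prepending a value -/

/-- The permutation of `Fin (n + 1)` whose first value is `p` and whose remaining values are, in
order, those of `σ` relabelled increasingly so as to skip `p`. -/
def consPerm {n : ℕ} (p : Fin (n + 1)) (σ : Equiv.Perm (Fin n)) : Equiv.Perm (Fin (n + 1)) :=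
  (Equiv.Perm.decomposeFin.symm (0, σ)).trans p.cycleRange.symm

@[simp] lemma consPerm_zero {n : ℕ} (p : Fin (n + 1)) (σ : Equiv.Perm (Fin n)) :
    consPerm p σ 0 = p := by
  simp [consPerm]

@[simp] lemma consPerm_succ {n : ℕ} (p : Fin (n + 1)) (σ : Equiv.Perm (Fin n)) (i : Fin n) :
    consPerm p σ i.succ = p.succAbove (σ i) := by
  simp [consPerm]

lemma consPerm_bijective (n : ℕ) :
    Function.Bijective (fun x : Fin (n + 1) × Equiv.Perm (Fin n) => consPerm x.1 x.2) := by
  rw [Fintype.bijective_iff_injective_and_card]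
  constructor
  · rintro ⟨p, σ⟩ ⟨p', σ'⟩ h
    have h0 : p = p' := by simpa using congrArg (fun e => e 0) h
    subst h0
    have h1 : σ = σ' := by
      ext i : 1
      simpa using congrArg (fun e => e i.succ) h
    rw [h1]
  · simp [Fintype.card_perm, Nat.factorial_succ]

lemma card_filter_consPerm {n : ℕ} (P : Equiv.Perm (Fin (n + 1)) → Prop) [DecidablePred P] :
    #{π | P π} = ∑ p : Fin (n + 1), #{σ : Equiv.Perm (Fin n) | P (consPerm p σ)} := by
  simp only [card_filter]
  rw [← Fintype.sum_prod_type']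
  exact ((consPerm_bijective n).sum_comp (fun π => if P π then 1 else 0)).symm

/-! ### Inversions and occurrences of `132` under prepending -/

/-- The number of inversions of `σ` among the entries whose value is at least `q`. -/
def invAbove {n : ℕ} (σ : Equiv.Perm (Fin n)) (q : ℕ) : ℕ :=
  ∑ i, ∑ j, if i < j ∧ σ j < σ i ∧ q ≤ (σ j : ℕ) then 1 else 0

/-- The number of occurrences of `132` in `σ`, as a sum over triples of positions. -/
def occ {n : ℕ} (σ : Equiv.Perm (Fin n)) : ℕ :=
  ∑ i, ∑ j, ∑ k, if i < j ∧ j < k ∧ σ i < σ k ∧ σ k < σ j then 1 else 0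

lemma numOcc_eq_occ {n : ℕ} (σ : Equiv.Perm (Fin n)) :
    numOcc (Equiv.swap (1 : Fin 3) 2) σ = occ σ := by
  have e : {f : Fin 3 → Fin n // StrictMono f ∧ ∀ a b : Fin 3,
      σ (f a) < σ (f b) ↔ Equiv.swap (1 : Fin 3) 2 a < Equiv.swap (1 : Fin 3) 2 b} ≃
      {x : Fin n × Fin n × Fin n //
        x.1 < x.2.1 ∧ x.2.1 < x.2.2 ∧ σ x.1 < σ x.2.2 ∧ σ x.2.2 < σ x.2.1} :=
    { toFun := fun f => ⟨(f.1 0, f.1 1, f.1 2), f.2.1 (by decide), f.2.1 (by decide),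
        (f.2.2 0 2).2 (by decide), (f.2.2 2 1).2 (by decide)⟩
      invFun := fun x => ⟨![x.1.1, x.1.2.1, x.1.2.2], by
        obtain ⟨⟨i, j, k⟩, h1, h2, h3, h4⟩ := x
        simp only at h1 h2 h3 h4
        constructor
        · rw [Fin.strictMono_iff_lt_succ]
          intro a
          fin_cases a
          · exact h1
          · exact h2
        · have h5 := h3.trans h4
          have s0 : Equiv.swap (1 : Fin 3) 2 0 = 0 := by decide
          intro a b
          fin_cases a <;> fin_cases b <;>
            simp [s0, h3, h4, h5, h3.le, h4.le, h5.le]⟩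
      left_inv := fun f => by
        ext a : 2
        fin_cases a <;> rfl
      right_inv := fun x => rfl }
  rw [numOcc, Nat.card_congr e, Nat.card_eq_fintype_card, Fintype.card_subtype, card_filter,
    Fintype.sum_prod_type, occ]
  refine Finset.sum_congr rfl fun i _ => ?_
  rw [Fintype.sum_prod_type]

lemma le_succAbove_iff {n : ℕ} (p : Fin (n + 1)) (v : Fin n) (q : ℕ) :
    q ≤ (p.succAbove v : ℕ) ↔ (if q ≤ (p : ℕ) then q else q - 1) ≤ (v : ℕ) := by
  rw [Fin.succAbove]
  simp only [Fin.lt_def, Fin.val_castSucc]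
  split_ifs <;> simp <;> omega

lemma lt_succAbove_iff' {n : ℕ} (p : Fin (n + 1)) (v : Fin n) :
    p < p.succAbove v ↔ (p : ℕ) ≤ (v : ℕ) := by
  rw [Fin.lt_succAbove_iff_le_castSucc, Fin.le_def]; simp

lemma succAbove_lt_iff' {n : ℕ} (p : Fin (n + 1)) (v : Fin n) :
    p.succAbove v < p ↔ (v : ℕ) < (p : ℕ) := by
  rw [Fin.succAbove_lt_iff_castSucc_lt, Fin.lt_def]; simp

lemma sum_between {n : ℕ} (p : Fin (n + 1)) (q : ℕ) :
    (∑ v : Fin n, if (v : ℕ) < (p : ℕ) ∧ q ≤ (v : ℕ) then 1 else 0) = (p : ℕ) - q := by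
  rw [Fin.sum_univ_eq_sum_range (fun v => if v < (p : ℕ) ∧ q ≤ v then 1 else 0) n,
    ← card_filter, ← Nat.card_Ico]
  congr 1
  ext v
  have := p.2
  simp only [mem_filter, mem_range, mem_Ico]
  omega

/-- Every value in `[q, p)` occurs after the leading `p`, which accounts for the new inversions. -/
lemma invAbove_consPerm {n : ℕ} (p : Fin (n + 1)) (σ : Equiv.Perm (Fin n)) (q : ℕ) :
    invAbove (consPerm p σ) q =
      if q ≤ (p : ℕ) then invAbove σ q + (p - q) else invAbove σ (q - 1) := by
  have h : ∑ j, (if p.succAbove (σ j) < p ∧ q ≤ (p.succAbove (σ j) : ℕ) then 1 else 0)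
      = (p : ℕ) - q := by
    rw [Equiv.sum_comp σ (fun v => if p.succAbove v < p ∧ q ≤ (p.succAbove v : ℕ)
      then 1 else 0), ← sum_between p q]
    refine Finset.sum_congr rfl fun v _ => ?_
    refine if_congr ?_ rfl rfl
    rw [succAbove_lt_iff', le_succAbove_iff]
    split_ifs <;> omega
  rw [invAbove]
  simp only [Fin.sum_univ_succ, consPerm_zero, consPerm_succ, Fin.succ_lt_succ_iff,
    Fin.succ_pos, true_and, Fin.not_lt_zero, false_and, if_false, zero_add, h,
    Fin.succAbove_lt_succAbove_iff]
  simp only [le_succAbove_iff]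
  split_ifs with hq
  · rw [invAbove, add_comm]
  · rw [invAbove, Nat.sub_eq_zero_of_le (by omega), zero_add]

/-- The occurrences starting at the leading `p` are the inversions among the larger values. -/
lemma occ_consPerm {n : ℕ} (p : Fin (n + 1)) (σ : Equiv.Perm (Fin n)) :
    occ (consPerm p σ) = occ σ + invAbove σ p := by
  rw [occ]
  simp only [Fin.sum_univ_succ, consPerm_zero, consPerm_succ, Fin.succ_lt_succ_iff,
    Fin.succ_pos, true_and, Fin.not_lt_zero, false_and, and_false, if_false, zero_add,
    Fin.succAbove_lt_succAbove_iff, lt_succAbove_iff', Finset.sum_const_zero]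
  rw [add_comm, occ, invAbove]
  congr 1
  refine Finset.sum_congr rfl fun i _ => Finset.sum_congr rfl fun j _ => ?_
  refine if_congr ?_ rfl rfl
  tauto

lemma invAbove_antitone {n : ℕ} (σ : Equiv.Perm (Fin n)) : Antitone (invAbove σ) := by
  intro q r hqr
  refine Finset.sum_le_sum fun i _ => Finset.sum_le_sum fun j _ => ?_
  split_ifs with h1 h2
  · rfl
  · exact absurd ⟨h1.1, h1.2.1, hqr.trans h1.2.2⟩ h2
  · simp
  · rfl

lemma invAbove_zero_mono {n : ℕ} {σ : Equiv.Perm (Fin n)} {q r : ℕ} (h : q ≤ r)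
    (h0 : invAbove σ q = 0) : invAbove σ r = 0 :=
  Nat.eq_zero_of_le_zero (h0 ▸ invAbove_antitone σ h)

/-- An inversion needs two values, so none lies among the values `≥ n - 1`. -/
lemma invAbove_top {n : ℕ} (σ : Equiv.Perm (Fin n)) {q : ℕ} (h : n ≤ q + 1) :
    invAbove σ q = 0 := by
  refine Finset.sum_eq_zero fun i _ => Finset.sum_eq_zero fun j _ => if_neg ?_
  rintro ⟨_, h1, h2⟩
  have := (σ i).2
  rw [Fin.lt_def] at h1
  omega

/-! ### Recurrences -/

/-- The number of `132`-avoiding permutations of `Fin n` whose values `≥ q` appear in increasing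
order. -/
def numAvoid (n q : ℕ) : ℕ :=
  #{σ : Equiv.Perm (Fin n) | occ σ = 0 ∧ invAbove σ q = 0}

/-- The number of permutations of `Fin n` with exactly one occurrence of `132` whose values `≥ q`
appear in increasing order. -/
def numOne (n q : ℕ) : ℕ :=
  #{σ : Equiv.Perm (Fin n) | occ σ = 1 ∧ invAbove σ q = 0}

lemma sum_fin_ite_le {n q : ℕ} (hq : q ≤ n + 1) (f : ℕ → ℕ) :
    (∑ p : Fin (n + 1), if (p : ℕ) < q then f p else 0) = ∑ p ∈ range q, f p := by
  rw [Fin.sum_univ_eq_sum_range (fun p => if p < q then f p else 0) (n + 1), ← sum_filter]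
  congr 1
  ext p
  simp only [mem_filter, mem_range]
  omega

lemma numAvoid_succ {n q : ℕ} (hq : q ≤ n) :
    numAvoid (n + 1) q = ∑ p ∈ range (q + 1), numAvoid n p := by
  rw [← sum_fin_ite_le (n := n) (by omega), numAvoid, card_filter_consPerm]
  refine Finset.sum_congr rfl fun p _ => ?_
  split_ifs with h
  · rw [numAvoid]
    congr 1
    ext σ
    simp only [mem_filter, mem_univ, true_and, occ_consPerm, invAbove_consPerm]
    constructor
    · rintro ⟨h1, -⟩
      omega
    · rintro ⟨h1, h2⟩
      refine ⟨by omega, ?_⟩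
      split_ifs with h3
      · have h4 : q = p := by omega
        rw [h4, h2]
        simp
      · exact invAbove_zero_mono (by omega) h2
  · rw [card_eq_zero, filter_eq_empty_iff]
    intro σ _
    rw [invAbove_consPerm, if_pos (by omega)]
    omega

/-- In a `132`-avoiding permutation `r ⋯`, exactly one inversion among the values `≥ p` forces
`r = p + 1`; the inversion is then formed by the values `p + 1` and `p`. -/
lemma single_inv_iff {n p : ℕ} (r : Fin (n + 1)) (τ : Equiv.Perm (Fin n)) :
    (occ (consPerm r τ) = 0 ∧ invAbove (consPerm r τ) p = 1) ↔
      (r : ℕ) = p + 1 ∧ occ τ = 0 ∧ invAbove τ p = 0 := by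
  rw [occ_consPerm, invAbove_consPerm]
  constructor
  · rintro ⟨h1, h2⟩
    have h3 : invAbove τ r = 0 := by omega
    split_ifs at h2 with h4
    · have h5 : (r : ℕ) ≠ p := by
        intro h
        rw [h] at h3
        omega
      omega
    · rw [invAbove_zero_mono (by omega) h3] at h2
      omega
  · rintro ⟨h1, h2, h3⟩
    rw [if_pos (by omega), h2, h3, invAbove_zero_mono (by omega) h3]
    omega

lemma card_single_inv {n p : ℕ} (hp : p + 1 ≤ n) :
    #{σ : Equiv.Perm (Fin (n + 1)) | occ σ = 0 ∧ invAbove σ p = 1} = numAvoid n p := by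
  rw [card_filter_consPerm, Finset.sum_eq_single (⟨p + 1, by omega⟩ : Fin (n + 1))]
  · simp only [single_inv_iff, true_and, numAvoid]
  · intro r _ hr
    rw [card_eq_zero, filter_eq_empty_iff]
    intro τ _ h
    exact hr (Fin.ext ((single_inv_iff r τ).1 h).1)
  · simp

lemma single_inv_succ {n p : ℕ} (σ : Equiv.Perm (Fin (n + 1)))
    (h0 : occ σ = 0) (h1 : invAbove σ p = 1) : invAbove σ (p + 1) = 0 := by
  obtain ⟨⟨r, τ⟩, rfl⟩ := (consPerm_bijective n).2 σ
  simp only at h0 h1 ⊢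
  obtain ⟨hr, -, h3⟩ := (single_inv_iff r τ).1 ⟨h0, h1⟩
  rw [invAbove_consPerm, if_pos (by omega), invAbove_zero_mono (by omega) h3]
  omega

/-- Either `σ` already has the occurrence, or `σ` avoids `132` and the leading `p` creates it. -/
lemma numOne_succ {n q : ℕ} (hq : q ≤ n + 1) :
    numOne (n + 2) q =
      ∑ p ∈ range (q + 1), numOne (n + 1) p + ∑ p ∈ range (q - 1), numAvoid n p := by
  rw [← sum_fin_ite_le (n := n + 1) (by omega), ← sum_fin_ite_le (n := n + 1) (q := q - 1)
    (by omega), ← Finset.sum_add_distrib, numOne, card_filter_consPerm]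
  refine Finset.sum_congr rfl fun p _ => ?_
  have key : (if (p : ℕ) < q - 1 then numAvoid n p else 0) =
      #{σ : Equiv.Perm (Fin (n + 1)) |
        (occ σ = 0 ∧ invAbove σ p = 1) ∧ invAbove (consPerm p σ) q = 0} := by
    split_ifs with h
    · rw [← card_single_inv (by omega)]
      congr 1
      ext σ
      simp only [mem_filter, mem_univ, true_and, iff_self_and]
      rintro ⟨h0, h1⟩
      rw [invAbove_consPerm, if_neg (by omega)]
      exact invAbove_zero_mono (by omega) (single_inv_succ σ h0 h1)
    · symm
      rw [card_eq_zero, filter_eq_empty_iff]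
      rintro σ - ⟨⟨-, h1⟩, h2⟩
      rw [invAbove_consPerm] at h2
      split_ifs at h2 with h3
      · have h4 := invAbove_antitone σ h3
        omega
      · have h4 : q - 1 = p := by omega
        rw [h4] at h2
        omega
  have key2 : (if (p : ℕ) < q + 1 then numOne (n + 1) p else 0) =
      #{σ : Equiv.Perm (Fin (n + 1)) |
        (occ σ = 1 ∧ invAbove σ p = 0) ∧ invAbove (consPerm p σ) q = 0} := by
    split_ifs with h
    · rw [numOne]
      congr 1
      ext σ
      simp only [mem_filter, mem_univ, true_and, iff_self_and]
      rintro ⟨-, h1⟩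
      rw [invAbove_consPerm]
      split_ifs with h3
      · have h4 : q = p := by omega
        rw [h4, h1]
        simp
      · exact invAbove_zero_mono (by omega) h1
    · symm
      rw [card_eq_zero, filter_eq_empty_iff]
      rintro σ - ⟨-, h2⟩
      rw [invAbove_consPerm, if_pos (by omega)] at h2
      omega
  rw [key, key2, ← card_union_of_disjoint]
  · congr 1
    ext σ
    simp only [mem_filter, mem_univ, true_and, occ_consPerm, mem_union]
    rw [← or_and_right]
    refine and_congr_left fun _ => ?_
    omega
  · rw [disjoint_filter]
    rintro σ - ⟨⟨h1, -⟩, -⟩ ⟨⟨h2, -⟩, -⟩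
    omega

lemma numAvoid_top {n q : ℕ} (h : n ≤ q + 1) : numAvoid n (q + 1) = numAvoid n q := by
  simp only [numAvoid, invAbove_top _ h, invAbove_top _ (h.trans (Nat.le_succ _))]

lemma numOne_top {n q : ℕ} (h : n ≤ q + 1) : numOne n (q + 1) = numOne n q := by
  simp only [numOne, invAbove_top _ h, invAbove_top _ (h.trans (Nat.le_succ _))]

/-! ### Closed forms -/

lemma occ_one (σ : Equiv.Perm (Fin 1)) : occ σ = 0 := by
  simp [occ]

lemma numOne_one (q : ℕ) : numOne 1 q = 0 := by
  simp [numOne, occ_one]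

lemma numOne_zero_right (n : ℕ) : numOne (n + 1) 0 = 0 := by
  induction n with
  | zero => exact numOne_one 0
  | succ n ih => rw [numOne_succ (by omega)]; simp [ih]

lemma numOne_one_right (n : ℕ) : numOne (n + 1) 1 = 0 := by
  induction n with
  | zero => exact numOne_one 1
  | succ n ih =>
    rw [numOne_succ (by omega)]
    simp [Finset.sum_range_succ, ih, numOne_zero_right]

lemma numAvoid_zero_zero : numAvoid 0 0 = 1 := by
  simp [numAvoid, occ, invAbove]

/-- Pascal-type ratio `(k + 1) * C(m + k + 1, k + 1) = (m + k + 1) * C(m + k, k)`. -/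
lemma choose_step_right (m k : ℕ) :
    ((k : ℚ) + 1) * ((m + (k + 1)).choose (k + 1) : ℚ) = (m + k + 1) * ((m + k).choose k : ℚ) := by
  have := Nat.add_one_mul_choose_eq (m + k) k
  rw [mul_comm ((k : ℚ) + 1)]
  exact_mod_cast this.symm

/-- The companion ratio `(m + 1) * C(m + 1 + k, k) = (m + k + 1) * C(m + k, k)`. -/
lemma choose_step_left (m k : ℕ) :
    ((m : ℚ) + 1) * ((m + 1 + k).choose k : ℚ) = (m + k + 1) * ((m + k).choose k : ℚ) := by
  have h1 := Nat.add_one_mul_choose_eq (m + k) m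
  rw [Nat.choose_symm_add, show m + k + 1 = m + 1 + k by ring, Nat.choose_symm_add] at h1
  have h2 : ((m : ℚ) + 1 + k) * ((m + k).choose k : ℚ) = (m + 1 + k).choose k * ((m : ℚ) + 1) := by
    exact_mod_cast h1
  linarith

/-- The counts `numAvoid n p` are the ballot numbers. -/
lemma numAvoid_formula (n : ℕ) : ∀ p ≤ n,
    ((n : ℚ) + 1) * numAvoid n p = (n + 1 - p) * ((n + p).choose p : ℚ) := by
  induction n with
  | zero =>
    intro p hp
    obtain rfl : p = 0 := by omega
    simp [numAvoid_zero_zero]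
  | succ n ih =>
    intro p
    induction p with
    | zero =>
      intro _
      have h := ih 0 (by omega)
      have hr : numAvoid (n + 1) 0 = numAvoid n 0 := by simp [numAvoid_succ]
      rw [hr]
      have h0 : (n : ℚ) + 1 ≠ 0 := by positivity
      have h' : (numAvoid n 0 : ℚ) = 1 := mul_left_cancel₀ h0 (by simpa using h)
      simp [h']
    | succ p ihp =>
      intro hp
      have h1 := ihp (by omega)
      have e1 := choose_step_right (n + 1) p
      have e2 := choose_step_right n p
      have e3 := choose_step_left n p
      rcases Nat.lt_or_ge n (p + 1) with h | h
      · obtain rfl : p = n := by omega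
        rw [numAvoid_top (by omega)]
        push_cast at *
        have h0 : (p : ℚ) + 1 ≠ 0 := by positivity
        apply mul_left_cancel₀ h0
        linear_combination (p + 1 : ℚ) * h1 - e1
      · have hr : numAvoid (n + 1) (p + 1) = numAvoid (n + 1) p + numAvoid n (p + 1) := by
          rw [numAvoid_succ h, Finset.sum_range_succ, ← numAvoid_succ (by omega)]
        have h2 := ih (p + 1) h
        rw [hr]
        push_cast at *
        rw [mul_comm, ← eq_div_iff (by positivity)] at h1 h2 e1 e2 e3
        rw [h1, h2, e1, e2, e3]
        field_simp
        ring

/-- The closed form of `numOne (m + 1) q` for `2 ≤ q ≤ m + 1`, with `q = k + 2`. The range is sharp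
enough for the induction because `numOne` is constant in `q` from `q = m` on. -/
lemma numOne_formula (m : ℕ) : ∀ k, k + 1 ≤ m →
    ((m : ℚ) + 1) * numOne (m + 1) (k + 2) = (m ^ 2 - 1 - m * k) * ((m + k).choose k : ℚ) := by
  induction m with
  | zero => intro k hk; omega
  | succ m ih =>
    intro k
    induction k with
    | zero =>
      intro _
      rcases Nat.eq_zero_or_pos m with rfl | hm
      · rw [numOne_top (by omega), numOne_one_right]
        simp
      · have hr : numOne (m + 2) 2 = numOne (m + 1) 2 + numAvoid m 0 := by
          rw [numOne_succ (by omega)]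
          simp [Finset.sum_range_succ, numOne_one_right, numOne_zero_right]
        have h1 := ih 0 hm
        have h2 := numAvoid_formula m 0 (by omega)
        simp only [zero_add] at *
        rw [hr]
        simp only [Nat.choose_zero_right] at *
        push_cast at *
        rw [mul_comm, ← eq_div_iff (by positivity)] at h1 h2
        rw [h1, h2]
        field_simp
        ring
    | succ k ihk =>
      intro hk
      have h1 := ihk (by omega)
      have e1 := choose_step_right (m + 1) k
      have e2 := choose_step_right m k
      have e3 := choose_step_left m k
      rcases Nat.lt_or_ge m (k + 2) with h | h
      · obtain rfl : m = k + 1 := by omega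
        rw [numOne_top (by omega)]
        push_cast at *
        rw [mul_comm, ← eq_div_iff (by positivity)] at h1 e1
        rw [h1, e1]
        field_simp
        ring
      · have hr : numOne (m + 2) (k + 1 + 2) =
            numOne (m + 2) (k + 2) + (numOne (m + 1) (k + 1 + 2) + numAvoid m (k + 1)) := by
          rw [numOne_succ (by omega), numOne_succ (by omega), Finset.sum_range_succ _ (k + 1 + 2),
            show k + 1 + 2 - 1 = k + 1 + 1 by omega, show k + 2 - 1 = k + 1 by omega,
            Finset.sum_range_succ _ (k + 1)]
          ring
        have h2 := ih (k + 1) h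
        have h3 := numAvoid_formula m (k + 1) (by omega)
        rw [hr]
        push_cast at *
        rw [mul_comm, ← eq_div_iff (by positivity)] at h1 h2 h3 e1 e2 e3
        rw [h1, h2, h3, e1, e2, e3]
        field_simp
        ring

theorem count_one_occ_132 (n : ℕ) (hn : 3 ≤ n) :
    (Nat.card {π : Equiv.Perm (Fin n) // numOcc (Equiv.swap (1 : Fin 3) 2) π = 1} : ℚ) =
      (Nat.factorial (2 * n - 3) : ℚ) /
        ((Nat.factorial n : ℚ) * (Nat.factorial (n - 3) : ℚ)) := by
  obtain ⟨k, rfl⟩ := Nat.exists_eq_add_of_le' hn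
  have hcard : Nat.card {π : Equiv.Perm (Fin (k + 3)) // numOcc (Equiv.swap (1 : Fin 3) 2) π = 1}
      = numOne (k + 2 + 1) (k + 2) := by
    simp only [numOcc_eq_occ]
    rw [Nat.card_eq_fintype_card, Fintype.card_subtype, numOne]
    congr 1
    ext σ
    simp [invAbove_top σ (q := k + 2) (by omega)]
  have h := numOne_formula (k + 2) k (by omega)
  have h1 : ((k + 2 + k).choose k : ℚ) * (k + 2).factorial * k.factorial
      = (k + 2 + k).factorial := by
    have := Nat.add_choose_mul_factorial_mul_factorial (k + 2) k
    exact_mod_cast this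
  rw [hcard, show 2 * (k + 3) - 3 = k + 2 + k + 1 by omega, show k + 3 - 3 = k by omega,
    eq_div_iff (by positivity), Nat.factorial_succ (k + 2 + k), Nat.factorial_succ (k + 2)]
  push_cast at *
  linear_combination (((k + 2).factorial : ℚ) * k.factorial) * h + (2 * (k : ℚ) + 3) * h1
end

section
/- For all n ≥ 4, the number of permutations of [n] containing exactly two occurrences of the pattern 132 equals (n³ + 17n² − 80n + 80)·(2n−6)!/(n!·2!·(n−4)!). -/
namespace Occ132

open Finset

/-! ### Occurrences of 132 in words -/

section Lists

variable {α β : Type*} [LinearOrder α] [LinearOrder β]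

/-- The number of pairs of letters `x … y` of the word, in this order, with `a < y < x`: the
occurrences of 132 in `a :: l` that start at the letter `a`. -/
def desc (a : α) : List α → ℕ
  | [] => 0
  | x :: l => desc a l + l.countP (fun y => a < y ∧ y < x)

/-- The number of occurrences of the pattern 132 in a word. -/
def occ : List α → ℕ
  | [] => 0
  | a :: l => occ l + desc a l

/-- The number of pairs `(a, y)`, with `a` a letter of `L` and `y` a letter of `R`, such that
`a < y`. -/
def asc (L R : List α) : ℕ := (L.map fun a => R.countP (fun y => a < y)).sum

/-- The number of occurrences of 132 in `L ++ R` with their first letter in `L` and the other two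
in `R`. -/
def crossDesc (L R : List α) : ℕ := (L.map fun a => desc a R).sum

/-- The number of occurrences of 132 in `L ++ R` with their first two letters in `L` and the last
one in `R`. -/
def crossAsc : List α → List α → ℕ
  | [], _ => 0
  | a :: L, R => crossAsc L R + (L.map fun x => R.countP (fun y => a < y ∧ y < x)).sum

theorem desc_append (a : α) (L R : List α) :
    desc a (L ++ R) =
      desc a L + desc a R + (L.map fun x => R.countP (fun y => a < y ∧ y < x)).sum := by
  induction L with
  | nil => simp [desc]
  | cons x L ih => simp only [List.cons_append, desc, ih, List.countP_append, List.map_cons,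
      List.sum_cons]; omega

theorem occ_append (L R : List α) :
    occ (L ++ R) = occ L + occ R + crossAsc L R + crossDesc L R := by
  induction L with
  | nil => simp [occ, crossAsc, crossDesc]
  | cons x L ih =>
    simp only [List.cons_append, occ, ih, desc_append, crossAsc, crossDesc, List.map_cons,
      List.sum_cons]; omega

theorem desc_eq_zero_of_forall_le (a : α) (L : List α) (h : ∀ x ∈ L, x ≤ a) : desc a L = 0 := by
  induction L with
  | nil => rfl
  | cons x L ih =>
    simp only [List.forall_mem_cons] at h
    simp only [desc, ih h.2, Nat.zero_add, List.countP_eq_zero]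
    intro y hy
    have := h.2 y hy
    simp [this.not_gt]

theorem crossAsc_cons_top (L R : List α) (M : α) (hL : ∀ x ∈ L, x ≤ M) :
    crossAsc L (M :: R) = crossAsc L R := by
  induction L with
  | nil => rfl
  | cons x L ih =>
    simp only [List.forall_mem_cons] at hL
    simp only [crossAsc, ih hL.2]
    congr 2
    apply List.map_congr_left
    intro y hy
    rw [List.countP_cons_of_neg]
    simp [(hL.2 y hy).not_gt]

theorem crossDesc_cons_top (L R : List α) (M : α) (hR : ∀ x ∈ R, x < M) :
    crossDesc L (M :: R) = crossDesc L R + asc L R := by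
  induction L with
  | nil => rfl
  | cons x L ih =>
    have : R.countP (fun y => x < y ∧ y < M) = R.countP (fun y => x < y) := by
      apply List.countP_congr
      intro y hy
      simp [hR y hy]
    simp only [crossDesc, asc, List.map_cons, List.sum_cons] at ih ⊢
    rw [ih, desc, this]; omega

/-- With a largest letter `M` between `L` and `R`, the occurrences of 132 that use `M` are the
ascents from `L` to `R`. -/
theorem occ_append_cons_top (L R : List α) (M : α) (hL : ∀ x ∈ L, x < M) (hR : ∀ x ∈ R, x < M) :
    occ (L ++ M :: R) = occ L + occ R + asc L R + crossAsc L R + crossDesc L R := by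
  rw [occ_append, occ, desc_eq_zero_of_forall_le M R (fun x hx => (hR x hx).le),
    crossAsc_cons_top L R M (fun x hx => (hL x hx).le), crossDesc_cons_top L R M hR]
  omega

theorem desc_map (f : α → β) (hf : StrictMono f) (a : α) (L : List α) :
    desc (f a) (L.map f) = desc a L := by
  induction L with
  | nil => rfl
  | cons x L ih => simp [desc, ih, List.countP_map, Function.comp_def, hf.lt_iff_lt]

theorem occ_map (f : α → β) (hf : StrictMono f) (L : List α) : occ (L.map f) = occ L := by
  induction L with
  | nil => rfl
  | cons x L ih => simp [occ, ih, desc_map f hf]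

/-- The arrangements of `S`: the words in which every element of `S`, and nothing else, occurs
exactly once. -/
def arr (S : Finset α) : Finset (List α) := (Multiset.lists S.val).toFinset

theorem mem_arr {S : Finset α} {l : List α} : l ∈ arr S ↔ l.Nodup ∧ ∀ x, x ∈ l ↔ x ∈ S := by
  rw [arr, Multiset.mem_toFinset, Multiset.mem_lists_iff]
  constructor
  · intro h
    have hn := S.nodup
    refine ⟨by rw [h] at hn; simpa using hn, fun x => ?_⟩
    rw [← Finset.mem_val, h]; simp
  · rintro ⟨h1, h2⟩
    refine (Multiset.Nodup.ext S.nodup (by simpa using h1)).2 ?_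
    intro x
    simpa using (h2 x).symm

/-- The number of arrangements of `S` with exactly `k` occurrences of 132. -/
def cnt (S : Finset α) (k : ℕ) : ℕ := #{l ∈ arr S | occ l = k}

/-- The number of arrangements of an `n`-element chain with exactly `k` occurrences of 132. -/
def num (n k : ℕ) : ℕ := cnt (univ : Finset (Fin n)) k

theorem arr_map (f : α ↪o β) (S : Finset α) :
    arr (S.map f.toEmbedding) = (arr S).image (List.map f) := by
  ext l
  simp only [Finset.mem_image, mem_arr, Finset.mem_map]
  constructor
  · rintro ⟨h1, h2⟩
    have : l ∈ Set.range (List.map f) := by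
      rw [Set.range_list_map]
      intro x hx
      obtain ⟨a, -, rfl⟩ := (h2 x).1 hx
      exact ⟨a, rfl⟩
    obtain ⟨l, rfl⟩ := this
    refine ⟨l, ⟨List.Nodup.of_map _ h1, fun x => ?_⟩, rfl⟩
    have := h2 (f x)
    simpa using this
  · rintro ⟨l, ⟨h1, h2⟩, rfl⟩
    refine ⟨h1.map f.injective, fun x => ?_⟩
    simp [h2]

theorem cnt_map (f : α ↪o β) (S : Finset α) (k : ℕ) : cnt (S.map f.toEmbedding) k = cnt S k := by
  rw [cnt, arr_map, Finset.filter_image, Finset.card_image_of_injective _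
    (List.map_injective_iff.2 f.injective), cnt]
  simp only [occ_map f f.strictMono]

/-- The count depends only on the size of the set of letters. -/
theorem cnt_eq_num {S : Finset α} {m : ℕ} (h : #S = m) (k : ℕ) : cnt S k = num m k := by
  rw [num, ← cnt_map (S.orderEmbOfFin h), Finset.map_orderEmbOfFin_univ]

end Lists

/-! ### From permutations to words -/

section Bridge

theorem desc_ofFn {n : ℕ} (a : ℕ) (f : Fin n → ℕ) : desc a (List.ofFn f) =
    ∑ j, ∑ k, if j < k ∧ a < f k ∧ f k < f j then 1 else 0 := by
  induction n with
  | zero => rfl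
  | succ n ih =>
    have key : ∀ {n : ℕ} (g : Fin n → ℕ) (b : ℕ), (List.ofFn g).countP (fun y => a < y ∧ y < b) =
        ∑ k, if a < g k ∧ g k < b then 1 else 0 := by
      intro n g b
      induction n with
      | zero => rfl
      | succ n ih =>
        rw [List.ofFn_succ, List.countP_cons, ih, Fin.sum_univ_succ]
        simp [add_comm]
    rw [List.ofFn_succ, desc, ih, key]
    simp only [Fin.sum_univ_succ (n := n), Fin.succ_lt_succ_iff, Fin.not_lt_zero, Fin.succ_pos,
      false_and, true_and, if_false, zero_add]
    exact add_comm _ _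

theorem occ_ofFn {n : ℕ} (f : Fin n → ℕ) : occ (List.ofFn f) =
    ∑ i, ∑ j, ∑ k, if i < j ∧ j < k ∧ f i < f k ∧ f k < f j then 1 else 0 := by
  induction n with
  | zero => rfl
  | succ n ih =>
    rw [List.ofFn_succ, occ, ih, desc_ofFn]
    simp only [Fin.sum_univ_succ (n := n), Fin.succ_lt_succ_iff, Fin.not_lt_zero, Fin.succ_pos,
      false_and, and_false, true_and, if_false, zero_add, Finset.sum_const_zero]
    exact add_comm _ _

theorem numOcc_eq_occ {n : ℕ} (π : Equiv.Perm (Fin n)) :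
    numOcc (Equiv.swap (1 : Fin 3) 2) π = occ (List.ofFn π) := by
  have h0 : List.ofFn (fun i => (π i : ℕ)) = (List.ofFn π).map (Fin.val) := by
    rw [List.map_ofFn]; rfl
  rw [← occ_map Fin.val Fin.val_strictMono, ← h0, occ_ofFn]
  have h1 : (∑ i : Fin n, ∑ j : Fin n, ∑ k : Fin n,
      if i < j ∧ j < k ∧ (π i : ℕ) < π k ∧ (π k : ℕ) < π j then 1 else 0) =
      #{p : Fin n × Fin n × Fin n | p.1 < p.2.1 ∧ p.2.1 < p.2.2 ∧ π p.1 < π p.2.2 ∧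
        π p.2.2 < π p.2.1} := by
    rw [Finset.card_filter, Fintype.sum_prod_type]
    simp only [Fintype.sum_prod_type, Fin.val_fin_lt]
  rw [h1, numOcc, ← Fintype.card_subtype, ← Nat.card_eq_fintype_card]
  refine Nat.card_congr ⟨fun f => ⟨(f.1 0, f.1 1, f.1 2), ?_⟩,
    fun p => ⟨![p.1.1, p.1.2.1, p.1.2.2], ?_, ?_⟩, ?_, ?_⟩
  · obtain ⟨f, hf, h⟩ := f
    refine ⟨hf (by decide), hf (by decide), (h 0 2).2 (by decide), (h 2 1).2 (by decide)⟩
  · obtain ⟨⟨i, j, k⟩, h1, h2, h3, h4⟩ := p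
    rw [Fin.strictMono_iff_lt_succ]
    intro i
    fin_cases i <;> simpa
  · obtain ⟨⟨i, j, k⟩, h1, h2, h3, h4⟩ := p
    have e0 : Equiv.swap (1 : Fin 3) 2 0 = 0 := by decide
    have e1 : Equiv.swap (1 : Fin 3) 2 1 = 2 := by decide
    have e2 : Equiv.swap (1 : Fin 3) 2 2 = 1 := by decide
    simp only at h3 h4
    intro a b
    fin_cases a <;> fin_cases b <;> simp [e0, e1, e2] <;> order
  · rintro ⟨f, hf⟩
    ext i
    fin_cases i <;> rfl
  · rintro ⟨⟨i, j, k⟩, h⟩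
    rfl

/-- Permutations are identified with arrangements through their one-line notation. -/
theorem card_eq_num (n k : ℕ) :
    Nat.card {π : Equiv.Perm (Fin n) // numOcc (Equiv.swap (1 : Fin 3) 2) π = k} = num n k := by
  simp only [numOcc_eq_occ]
  rw [num, cnt, Nat.card_eq_fintype_card, Fintype.card_subtype]
  refine Finset.card_bij (fun π _ => List.ofFn π) ?_ ?_ ?_
  · intro π hπ
    simp only [Finset.mem_filter, Finset.mem_univ, true_and, mem_arr, iff_true] at hπ ⊢
    refine ⟨⟨List.nodup_ofFn.2 π.injective, fun x => ?_⟩, hπ⟩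
    rw [List.mem_ofFn]
    exact π.surjective x
  · intro π _ σ _ h
    exact DFunLike.coe_injective (List.ofFn_injective h)
  · intro l hl
    simp only [Finset.mem_filter, Finset.mem_univ, mem_arr, iff_true] at hl
    obtain ⟨⟨h1, h2⟩, h3⟩ := hl
    have hlen : l.length = n := by
      have := List.toFinset_card_of_nodup h1
      rw [← this, show l.toFinset = univ by ext; simp [h2]]; simp
    have hinj : Function.Injective fun i : Fin n => l.get (i.cast hlen.symm) :=
      (List.nodup_iff_injective_get.1 h1).comp (Fin.cast_injective _)
    have hof : List.ofFn (fun i : Fin n => l.get (i.cast hlen.symm)) = l := by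
      rw [← List.ofFn_congr hlen, List.ofFn_get]
    refine ⟨Equiv.ofBijective _ (Finite.injective_iff_bijective.1 hinj), ?_, hof⟩
    simpa only [Finset.mem_filter, Finset.mem_univ, true_and, Equiv.coe_ofBijective, hof] using h3

end Bridge

/-! ### Splitting at the largest letter -/

section Split

theorem countP_eq_card {R : List ℕ} {U : Finset ℕ} (hR : R ∈ arr U) (p : ℕ → Prop)
    [DecidablePred p] : R.countP (fun y => p y) = #{y ∈ U | p y} := by
  obtain ⟨h1, h2⟩ := mem_arr.1 hR
  have hU : U = R.toFinset := by ext; simp [h2]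
  have h3 : {y ∈ R.toFinset | p y} = (R.filter fun y => p y).toFinset := by ext; simp
  rw [hU, h3, List.toFinset_card_of_nodup (h1.filter _), List.countP_eq_length_filter]

/-- The number of pairs `(a, y)` in `T × U` with `a < y`. -/
def ascS (T U : Finset ℕ) : ℕ := ∑ a ∈ T, #{y ∈ U | a < y}

theorem asc_eq_ascS {L R : List ℕ} {T U : Finset ℕ} (hL : L ∈ arr T) (hR : R ∈ arr U) :
    asc L R = ascS T U := by
  obtain ⟨h1, h2⟩ := mem_arr.1 hL
  have hT : T = L.toFinset := by ext; simp [h2]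
  rw [ascS, hT, List.sum_toFinset _ h1, asc]
  simp only [countP_eq_card hR]

/-- The number of occurrences of 132 in `L M R`, for `M` larger than all letters of `L` and `R`. -/
def tot (L R : List ℕ) : ℕ := occ L + occ R + asc L R + crossAsc L R + crossDesc L R

/-- The number of pairs of arrangements `L` of `T` and `R` of `U` for which `L M R` has exactly `k`
occurrences of 132, where `M` is larger than all letters. -/
def splitCnt (T U : Finset ℕ) (k : ℕ) : ℕ := #{q ∈ arr T ×ˢ arr U | tot q.1 q.2 = k}

/-- Splitting at the largest letter `n` and sorting by the set `T` of letters to its left. -/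
theorem num_succ (n k : ℕ) :
    num (n + 1) k = ∑ T ∈ (range n).powerset, splitCnt T (range n \ T) k := by
  rw [← cnt_eq_num (card_range (n + 1)), cnt]
  simp only [splitCnt]
  rw [← Finset.card_sigma]
  symm
  refine Finset.card_bij (fun q _ => q.2.1 ++ n :: q.2.2) ?_ ?_ ?_
  · rintro ⟨T, L, R⟩ h
    simp only [Finset.mem_sigma, Finset.mem_filter, Finset.mem_product, Finset.mem_powerset,
      mem_arr] at h ⊢
    obtain ⟨hT, ⟨⟨hL1, hL2⟩, hR1, hR2⟩, ht⟩ := h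
    have hL : ∀ x ∈ L, x < n := fun x hx => Finset.mem_range.1 (hT ((hL2 x).1 hx))
    have hR : ∀ x ∈ R, x < n := fun x hx => by
      have := (hR2 x).1 hx
      simp only [Finset.mem_sdiff, Finset.mem_range] at this
      exact this.1
    refine ⟨⟨?_, fun x => ?_⟩, ?_⟩
    · rw [List.nodup_append]
      refine ⟨hL1, List.nodup_cons.2 ⟨fun h => (hR n h).false, hR1⟩, ?_⟩
      intro a ha b hb
      rcases List.mem_cons.1 hb with rfl | hb
      · exact (hL a ha).ne
      · rintro rfl
        have := (hR2 a).1 hb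
        simp only [Finset.mem_sdiff] at this
        exact this.2 ((hL2 a).1 ha)
    · simp only [List.mem_append, List.mem_cons, hL2, hR2, Finset.mem_sdiff, Finset.mem_range]
      constructor
      · rintro (h | rfl | h)
        · have := Finset.mem_range.1 (hT h); omega
        · omega
        · omega
      · intro h
        by_cases hx : x ∈ T
        · exact Or.inl hx
        · rcases Nat.lt_succ_iff_lt_or_eq.1 h with h | h
          · exact Or.inr (Or.inr ⟨h, hx⟩)
          · exact Or.inr (Or.inl h)
    · rw [occ_append_cons_top L R n hL hR]; exact ht
  · rintro ⟨T, L, R⟩ h ⟨T', L', R'⟩ h' heq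
    simp only [Finset.mem_sigma, Finset.mem_filter, Finset.mem_product, Finset.mem_powerset,
      mem_arr] at h h' heq
    obtain ⟨hT, ⟨⟨hL1, hL2⟩, hR1, hR2⟩, -⟩ := h
    obtain ⟨hT', ⟨⟨hL1', hL2'⟩, hR1', hR2'⟩, -⟩ := h'
    have e1 : n ∉ L := fun h => by simpa using hT ((hL2 n).1 h)
    have e2 : n ∉ R := fun h => by simpa using (hR2 n).1 h
    obtain ⟨rfl, -, rfl⟩ := (List.append_cons_inj_of_notMem e1 e2).1 heq
    obtain rfl : T = T' := by ext x; rw [← hL2, hL2']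
    rfl
  · intro l hl
    simp only [Finset.mem_filter, mem_arr] at hl
    obtain ⟨⟨h1, h2⟩, h3⟩ := hl
    obtain ⟨L, R, rfl⟩ := List.append_of_mem ((h2 n).2 (by simp))
    rw [List.nodup_append, List.nodup_cons] at h1
    obtain ⟨hL1, ⟨hn, hR1⟩, hd⟩ := h1
    have hL : ∀ x ∈ L, x < n := fun x hx => by
      have := (h2 x).1 (by simp [hx])
      have h4 := hd x hx n (by simp)
      simp only [Finset.mem_range] at this; omega
    have hR : ∀ x ∈ R, x < n := fun x hx => by
      have := (h2 x).1 (by simp [hx])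
      have h4 : x ≠ n := by rintro rfl; exact hn hx
      simp only [Finset.mem_range] at this; omega
    refine ⟨⟨L.toFinset, L, R⟩, ?_, rfl⟩
    simp only [Finset.mem_sigma, Finset.mem_filter, Finset.mem_product, Finset.mem_powerset,
      mem_arr]
    refine ⟨fun x hx => ?_, ⟨⟨hL1, fun x => by simp⟩, hR1, fun x => ?_⟩, ?_⟩
    · simpa using hL x (by simpa using hx)
    · simp only [Finset.mem_sdiff, Finset.mem_range, List.mem_toFinset]
      constructor
      · intro hx
        exact ⟨hR x hx, fun hx' => hd x hx' x (by simp [hx]) rfl⟩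
      · rintro ⟨hx, hx'⟩
        have := (h2 x).2 (by simp; omega)
        simp only [List.mem_append, List.mem_cons] at this
        rcases this with h | h | h
        · exact absurd h hx'
        · omega
        · exact h
    · rw [tot, ← occ_append_cons_top L R n hL hR]; exact h3

/-- A new largest element outside `T` creates an ascent from each element of `T`. -/
theorem ascS_succ_of_subset {n : ℕ} {T : Finset ℕ} (hT : T ⊆ range n) :
    ascS T (range (n + 1) \ T) = ascS T (range n \ T) + #T := by
  have hn : n ∉ T := fun h => by simpa using hT h
  rw [ascS, ascS, Finset.card_eq_sum_ones, ← Finset.sum_add_distrib]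
  refine Finset.sum_congr rfl fun a ha => ?_
  have ha' : a < n := by simpa using hT ha
  rw [Finset.range_add_one, Finset.insert_sdiff_of_notMem _ hn, Finset.filter_insert, if_pos ha',
    Finset.card_insert_of_notMem]
  simp

/-- A new largest element inside `T` creates no ascent. -/
theorem ascS_succ_insert {n : ℕ} {T : Finset ℕ} (hT : T ⊆ range n) :
    ascS (insert n T) (range (n + 1) \ insert n T) = ascS T (range n \ T) := by
  have hn : n ∉ T := fun h => by simpa using hT h
  have h1 : range (n + 1) \ insert n T = range n \ T := by
    ext x; simp only [Finset.mem_sdiff, Finset.mem_range, Finset.mem_insert]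
    grind
  rw [h1, ascS, Finset.sum_insert hn, ascS, Nat.add_eq_right, Finset.card_eq_zero,
    Finset.filter_eq_empty_iff]
  intro x hx
  simp only [Finset.mem_sdiff, Finset.mem_range] at hx
  omega

theorem eq_or_insert {n : ℕ} {T : Finset ℕ} (hT : T ⊆ range (n + 1)) :
    T ⊆ range n ∨ ∃ T' ⊆ range n, T = insert n T' := by
  by_cases hn : n ∈ T
  · refine Or.inr ⟨T.erase n, fun x hx => ?_, (Finset.insert_erase hn).symm⟩
    have := hT (Finset.mem_of_mem_erase hx)
    have h2 := Finset.ne_of_mem_erase hx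
    simp at this ⊢; omega
  · refine Or.inl fun x hx => ?_
    have := hT hx
    have h2 : x ≠ n := by rintro rfl; exact hn hx
    simp at this ⊢; omega

theorem ascS_eq_zero {n : ℕ} {T : Finset ℕ} (hT : T ⊆ range n) (h : ascS T (range n \ T) = 0) :
    ∃ j ≤ n, T = Ico j n := by
  induction n generalizing T with
  | zero => exact ⟨0, le_rfl, by simpa using hT⟩
  | succ n ih =>
    rcases eq_or_insert hT with hT | ⟨T, hT', rfl⟩
    · rw [ascS_succ_of_subset hT] at h
      have : T = ∅ := by rw [← Finset.card_eq_zero]; omega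
      exact ⟨n + 1, le_rfl, by simp [this]⟩
    · rw [ascS_succ_insert hT'] at h
      obtain ⟨j, hj, rfl⟩ := ih hT' h
      exact ⟨j, by omega, by ext x; simp; omega⟩

theorem ascS_eq_one {n : ℕ} {T : Finset ℕ} (hT : T ⊆ range n) (h : ascS T (range n \ T) = 1) :
    ∃ j, j + 1 < n ∧ T = insert j (Ico (j + 2) n) := by
  induction n generalizing T with
  | zero => simp [Finset.subset_empty.1 hT, ascS] at h
  | succ n ih =>
    rcases eq_or_insert hT with hT | ⟨T, hT', rfl⟩
    · rw [ascS_succ_of_subset hT] at h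
      have h1 : ascS T (range n \ T) = 0 := by
        by_contra h0
        have : T = ∅ := by rw [← Finset.card_eq_zero]; omega
        simp [this, ascS] at h0
      obtain ⟨j, hj, rfl⟩ := ascS_eq_zero hT h1
      rw [h1, Nat.card_Ico] at h
      exact ⟨j, by omega, by ext x; simp; omega⟩
    · rw [ascS_succ_insert hT'] at h
      obtain ⟨j, hj, rfl⟩ := ih hT' h
      exact ⟨j, by omega, by ext x; simp; omega⟩

theorem ascS_eq_two {n : ℕ} {T : Finset ℕ} (hT : T ⊆ range n) (h : ascS T (range n \ T) = 2) :
    ∃ j, j + 2 < n ∧ (T = insert j (insert (j + 1) (Ico (j + 3) n)) ∨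
      T = insert j (Ico (j + 3) n)) := by
  induction n generalizing T with
  | zero => simp [Finset.subset_empty.1 hT, ascS] at h
  | succ n ih =>
    rcases eq_or_insert hT with hT | ⟨T, hT', rfl⟩
    · rw [ascS_succ_of_subset hT] at h
      have hne : #T ≠ 0 := by
        intro h0
        rw [Finset.card_eq_zero] at h0
        simp [h0, ascS] at h
      obtain h1 | h1 : ascS T (range n \ T) = 0 ∨ ascS T (range n \ T) = 1 := by omega
      · obtain ⟨j, hj, rfl⟩ := ascS_eq_zero hT h1
        rw [h1, Nat.card_Ico] at h
        exact ⟨j, by omega, Or.inl (by ext x; simp; omega)⟩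
      · obtain ⟨j, hj, rfl⟩ := ascS_eq_one hT h1
        rw [h1, Finset.card_insert_of_notMem (by simp), Nat.card_Ico] at h
        exact ⟨j, by omega, Or.inr (by ext x; simp; omega)⟩
    · rw [ascS_succ_insert hT'] at h
      obtain ⟨j, hj, rfl | rfl⟩ := ih hT' h
      · exact ⟨j, by omega, Or.inl (by ext x; simp; omega)⟩
      · exact ⟨j, by omega, Or.inr (by ext x; simp; omega)⟩

theorem compl_zero {n j : ℕ} (hj : j ≤ n) : range n \ Ico j n = range j := by
  ext x; simp; omega

theorem compl_one {n j : ℕ} (hj : j + 1 < n) :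
    range n \ insert j (Ico (j + 2) n) = insert (j + 1) (range j) := by
  ext x; simp; omega

theorem compl_two_a {n j : ℕ} (hj : j + 2 < n) :
    range n \ insert j (insert (j + 1) (Ico (j + 3) n)) = insert (j + 2) (range j) := by
  ext x; simp; omega

theorem compl_two_b {n j : ℕ} (hj : j + 2 < n) :
    range n \ insert j (Ico (j + 3) n) = insert (j + 1) (insert (j + 2) (range j)) := by
  ext x; simp; omega

theorem ascS_zero (n j : ℕ) : ascS (Ico j n) (range j) = 0 := by
  refine Finset.sum_eq_zero fun a ha => ?_
  rw [Finset.card_eq_zero, Finset.filter_eq_empty_iff]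
  intro x hx
  simp at ha hx; omega

theorem ascS_one (n j : ℕ) : ascS (insert j (Ico (j + 2) n)) (insert (j + 1) (range j)) = 1 := by
  rw [ascS, Finset.sum_insert (by simp), Finset.sum_eq_zero, add_zero, Finset.card_eq_one]
  · exact ⟨j + 1, by ext x; simp; omega⟩
  · intro a ha
    rw [Finset.card_eq_zero, Finset.filter_eq_empty_iff]
    intro x hx
    simp at ha hx; omega

theorem ascS_two_a (n j : ℕ) :
    ascS (insert j (insert (j + 1) (Ico (j + 3) n))) (insert (j + 2) (range j)) = 2 := by
  have e : ∀ a, a = j ∨ a = j + 1 → #{y ∈ insert (j + 2) (range j) | a < y} = 1 := by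
    intro a ha
    rw [Finset.card_eq_one]
    exact ⟨j + 2, by ext x; simp; omega⟩
  rw [ascS, Finset.sum_insert (by simp), Finset.sum_insert (by simp), Finset.sum_eq_zero,
    add_zero, e _ (Or.inl rfl), e _ (Or.inr rfl)]
  · intro a ha
    rw [Finset.card_eq_zero, Finset.filter_eq_empty_iff]
    intro x hx
    simp at ha hx; omega

theorem ascS_two_b (n j : ℕ) :
    ascS (insert j (Ico (j + 3) n)) (insert (j + 1) (insert (j + 2) (range j))) = 2 := by
  rw [ascS, Finset.sum_insert (by simp), Finset.sum_eq_zero, add_zero, Finset.card_eq_two]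
  · exact ⟨j + 1, j + 2, by omega, by ext x; simp; omega⟩
  · intro a ha
    rw [Finset.card_eq_zero, Finset.filter_eq_empty_iff]
    intro x hx
    simp at ha hx; omega

/-- A function that vanishes on sets with more than two ascents to their complement is summed over
the four families of sets with at most two ascents. -/
theorem sum_powerset_range (n : ℕ) (F : Finset ℕ → ℕ)
    (hF : ∀ T ⊆ range n, 2 < ascS T (range n \ T) → F T = 0) :
    ∑ T ∈ (range n).powerset, F T =
      ∑ j ∈ range (n + 1), F (Ico j n) +
      ∑ j ∈ range (n - 1), F (insert j (Ico (j + 2) n)) +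
      (∑ j ∈ range (n - 2), F (insert j (insert (j + 1) (Ico (j + 3) n))) +
        ∑ j ∈ range (n - 2), F (insert j (Ico (j + 3) n))) := by
  have e1 : ∑ T ∈ (range n).powerset, F T = ∑ i ∈ range 3,
      ∑ T ∈ (range n).powerset with ascS T (range n \ T) = i, F T := by
    simp only [Finset.sum_filter]
    rw [Finset.sum_comm]
    refine Finset.sum_congr rfl fun T hT => ?_
    rw [Finset.sum_ite_eq]
    split_ifs with h
    · rfl
    · exact hF T (by simpa using hT) (by simpa [Nat.succ_le_iff] using h)
  have f0 : {T ∈ (range n).powerset | ascS T (range n \ T) = 0} =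
      (range (n + 1)).image fun j => Ico j n := by
    ext T
    simp only [Finset.mem_filter, Finset.mem_powerset, Finset.mem_image, Finset.mem_range]
    constructor
    · rintro ⟨h1, h2⟩
      obtain ⟨j, hj, rfl⟩ := ascS_eq_zero h1 h2
      exact ⟨j, by omega, rfl⟩
    · rintro ⟨j, hj, rfl⟩
      rw [compl_zero (by omega)]
      exact ⟨fun x => by simp, ascS_zero n j⟩
  have f1 : {T ∈ (range n).powerset | ascS T (range n \ T) = 1} =
      (range (n - 1)).image fun j => insert j (Ico (j + 2) n) := by
    ext T
    simp only [Finset.mem_filter, Finset.mem_powerset, Finset.mem_image, Finset.mem_range]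
    constructor
    · rintro ⟨h1, h2⟩
      obtain ⟨j, hj, rfl⟩ := ascS_eq_one h1 h2
      exact ⟨j, by omega, rfl⟩
    · rintro ⟨j, hj, rfl⟩
      rw [compl_one (by omega)]
      exact ⟨fun x => by simp; omega, ascS_one n j⟩
  have f2 : {T ∈ (range n).powerset | ascS T (range n \ T) = 2} =
      ((range (n - 2)).image fun j => insert j (insert (j + 1) (Ico (j + 3) n))) ∪
      ((range (n - 2)).image fun j => insert j (Ico (j + 3) n)) := by
    ext T
    simp only [Finset.mem_filter, Finset.mem_powerset, Finset.mem_image, Finset.mem_range,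
      Finset.mem_union]
    constructor
    · rintro ⟨h1, h2⟩
      obtain ⟨j, hj, rfl | rfl⟩ := ascS_eq_two h1 h2
      · exact Or.inl ⟨j, by omega, rfl⟩
      · exact Or.inr ⟨j, by omega, rfl⟩
    · rintro (⟨j, hj, rfl⟩ | ⟨j, hj, rfl⟩)
      · rw [compl_two_a (by omega)]
        exact ⟨fun x => by simp; omega, ascS_two_a n j⟩
      · rw [compl_two_b (by omega)]
        exact ⟨fun x => by simp; omega, ascS_two_b n j⟩
  -- A set in one of the listed shapes determines `j`, which is its least element.
  have hmin : ∀ {i j : ℕ} {V W : Finset ℕ}, (∀ x ∈ V, i < x) → (∀ x ∈ W, j < x) →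
      insert i V = insert j W → i = j := by
    intro i j V W hV hW h
    have h1 : i ∈ insert j W := h ▸ Finset.mem_insert_self i V
    have h2 : j ∈ insert i V := h ▸ Finset.mem_insert_self j W
    rcases Finset.mem_insert.1 h1 with h1 | h1
    · exact h1
    · rcases Finset.mem_insert.1 h2 with h2 | h2
      · exact h2.symm
      · have := hV _ h2
        have := hW _ h1
        omega
  rw [e1, Finset.sum_range_succ, Finset.sum_range_succ, Finset.sum_range_one, f0, f1, f2,
    Finset.sum_image, Finset.sum_image, Finset.sum_union, Finset.sum_image, Finset.sum_image]
  · intro i _ j _ h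
    exact hmin (by simp; omega) (by simp; omega) h
  · intro i _ j _ h
    exact hmin (by simp; omega) (by simp; omega) h
  · rw [Finset.disjoint_left]
    intro T h1 h2
    obtain ⟨i, hi, rfl⟩ := Finset.mem_image.1 h1
    obtain ⟨j, hj, h⟩ := Finset.mem_image.1 h2
    obtain rfl := hmin (by simp; omega) (by simp; omega) h
    have : j + 1 ∈ insert j (Ico (j + 3) n) := by rw [h]; simp
    simp at this
  · intro i _ j _ h
    exact hmin (by simp; omega) (by simp; omega) h
  · intro i hi j hj h
    have := congrArg Finset.card h
    simp at this hi hj; omega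

end Split

/-! ### Counting the pairs with at most one ascent -/

section Evaluate

/-- Letters of `L₁` that lie above every letter of `R` can be dropped: they cannot be the first
letter of an occurrence ending in `R`. -/
theorem crossAsc_append {L₁ L₂ R : List ℕ} (h : ∀ a ∈ L₁, ∀ y ∈ R, ¬ a < y) :
    crossAsc (L₁ ++ L₂) R = crossAsc L₂ R := by
  induction L₁ with
  | nil => rfl
  | cons a L ih =>
    simp only [List.forall_mem_cons] at h
    rw [List.cons_append, crossAsc, ih h.2, Nat.add_eq_left, List.sum_eq_zero_iff]
    simp only [List.mem_map]
    rintro _ ⟨x, -, rfl⟩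
    rw [List.countP_eq_zero]
    intro y hy
    simp [h.1 y hy]

theorem crossAsc_eq_zero {L R : List ℕ} (h : ∀ a ∈ L, ∀ y ∈ R, ¬ a < y) : crossAsc L R = 0 := by
  have := crossAsc_append (L₂ := []) h
  rw [List.append_nil] at this
  exact this

theorem desc_eq_zero_iff {a : ℕ} {L : List ℕ} :
    desc a L = 0 ↔ L.Pairwise fun x y => ¬ (a < y ∧ y < x) := by
  induction L with
  | nil => simp [desc]
  | cons x L ih =>
    rw [desc, Nat.add_eq_zero_iff, ih, List.pairwise_cons, List.countP_eq_zero]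
    simp only [decide_eq_true_eq]
    tauto

theorem crossAsc_eq_zero_iff {L R : List ℕ} :
    crossAsc L R = 0 ↔ L.Pairwise fun a x => ∀ y ∈ R, ¬ (a < y ∧ y < x) := by
  induction L with
  | nil => simp [crossAsc]
  | cons a L ih =>
    rw [crossAsc, Nat.add_eq_zero_iff, ih, List.pairwise_cons, List.sum_eq_zero_iff]
    simp only [List.mem_map, forall_exists_index, and_imp, forall_apply_eq_imp_iff₂,
      List.countP_eq_zero, decide_eq_true_eq]
    tauto

theorem crossDesc_eq_zero {L R : List ℕ} (h : ∀ a ∈ L, ∀ y ∈ R, ¬ a < y) : crossDesc L R = 0 := by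
  rw [crossDesc, List.sum_eq_zero_iff]
  simp only [List.mem_map]
  rintro _ ⟨a, ha, rfl⟩
  exact desc_eq_zero_of_forall_le a R fun y hy => not_lt.1 (h a ha y hy)

theorem occ_append_of_le {L R : List ℕ} (h : ∀ a ∈ L, ∀ y ∈ R, ¬ a < y) :
    occ (L ++ R) = occ L + occ R := by
  rw [occ_append, crossAsc_eq_zero h, crossDesc_eq_zero h]; rfl

/-- Pairs sorted by how the sum `k` of two statistics is distributed between the factors. -/
theorem card_add_eq {α β : Type*} (A : Finset α) (B : Finset β) (f : α → ℕ) (g : β → ℕ) (k : ℕ) :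
    #{q ∈ A ×ˢ B | f q.1 + g q.2 = k} =
      ∑ p ∈ antidiagonal k, #{a ∈ A | f a = p.1} * #{b ∈ B | g b = p.2} := by
  classical
  simp only [← Finset.card_product]
  rw [Finset.card_eq_sum_card_fiberwise (f := fun q => (f q.1, g q.2)) (t := antidiagonal k)]
  · refine Finset.sum_congr rfl ?_
    rintro ⟨i, j⟩ h
    rw [HasAntidiagonal.mem_antidiagonal] at h
    congr 1
    ext ⟨a, b⟩
    simp only [Finset.mem_filter, Finset.mem_product, Prod.mk.injEq]
    constructor
    · rintro ⟨⟨⟨h1, h2⟩, -⟩, h3, h4⟩; exact ⟨⟨h1, h3⟩, h2, h4⟩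
    · rintro ⟨⟨h1, h3⟩, h2, h4⟩; exact ⟨⟨⟨h1, h2⟩, by simp only at h; omega⟩, h3, h4⟩
  · intro q hq
    simp only [Finset.coe_filter, Set.mem_ofPred_eq] at hq
    simpa using hq.2

theorem splitCnt_zero (n j k : ℕ) : splitCnt (Ico j n) (range j) k =
    ∑ p ∈ antidiagonal k, num (n - j) p.1 * num j p.2 := by
  simp only [← cnt_eq_num (Nat.card_Ico j n), ← cnt_eq_num (card_range j)]
  rw [splitCnt]
  simp only [cnt]
  rw [← card_add_eq]
  congr 1
  refine Finset.filter_congr ?_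
  rintro ⟨L, R⟩ h
  obtain ⟨hL, hR⟩ := Finset.mem_product.1 h
  have hlt : ∀ a ∈ L, ∀ y ∈ R, ¬ a < y := by
    intro a ha y hy
    have h1 := ((mem_arr.1 hL).2 a).1 ha
    have h2 := ((mem_arr.1 hR).2 y).1 hy
    simp at h1 h2; omega
  rw [tot, asc_eq_ascS hL hR, crossAsc_eq_zero hlt, crossDesc_eq_zero hlt]
  simp only [ascS_zero, add_zero]

theorem splitCnt_eq_zero {T U : Finset ℕ} {k : ℕ} (h : k < ascS T U) : splitCnt T U k = 0 := by
  rw [splitCnt, Finset.card_eq_zero, Finset.filter_eq_empty_iff]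
  rintro ⟨L, R⟩ h'
  obtain ⟨hL, hR⟩ := Finset.mem_product.1 h'
  rw [tot, asc_eq_ascS hL hR]
  simp only
  omega

/-- The number of letters after the first occurrence of `j` in `L`, for `j` a letter of `L`. -/
def aft (j : ℕ) (L : List ℕ) : ℕ := L.length - 1 - L.idxOf j

theorem aft_append {j : ℕ} {L₁ L₂ : List ℕ} (h : j ∉ L₁) : aft j (L₁ ++ j :: L₂) = L₂.length := by
  rw [aft, List.idxOf_append_of_notMem h, List.idxOf_cons_self]
  simp

theorem exists_of_mem_arr_insert {j : ℕ} {V : Finset ℕ} (hV : j ∉ V) {L : List ℕ} :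
    L ∈ arr (insert j V) ↔ ∃ L₁ L₂, L = L₁ ++ j :: L₂ ∧ L₁ ++ L₂ ∈ arr V := by
  constructor
  · intro hL
    obtain ⟨h1, h2⟩ := mem_arr.1 hL
    obtain ⟨L₁, L₂, rfl⟩ := List.append_of_mem ((h2 j).2 (by simp))
    refine ⟨L₁, L₂, rfl, mem_arr.2 ?_⟩
    rw [List.nodup_middle, List.nodup_cons] at h1
    refine ⟨h1.2, fun x => ?_⟩
    have := h2 x
    have h3 : x ∈ L₁ ++ L₂ → x ≠ j := by rintro h rfl; exact h1.1 h
    simp only [List.mem_append, List.mem_cons, Finset.mem_insert] at this h3 ⊢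
    have h4 : x ∈ V → x ≠ j := by rintro h rfl; exact hV h
    tauto
  · rintro ⟨L₁, L₂, rfl, hL⟩
    obtain ⟨h1, h2⟩ := mem_arr.1 hL
    rw [mem_arr, List.nodup_middle, List.nodup_cons]
    refine ⟨⟨fun h => hV ((h2 j).1 h), h1⟩, fun x => ?_⟩
    have := h2 x
    simp only [List.mem_append, List.mem_cons, Finset.mem_insert] at this ⊢
    tauto

theorem notMem_of_mem_arr {j : ℕ} {V : Finset ℕ} (hV : j ∉ V) {L : List ℕ} (hL : L ∈ arr V) :
    j ∉ L := fun h => hV (((mem_arr.1 hL).2 j).1 h)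

/-- A smallest letter `j` placed last takes part in no occurrence of 132. -/
theorem card_occ_add_aft_zero {j : ℕ} {V : Finset ℕ} (hV : ∀ x ∈ V, j < x) (k : ℕ) :
    #{L ∈ arr (insert j V) | occ L = k ∧ aft j L = 0} = cnt V k := by
  have hj : j ∉ V := fun h => (hV j h).false
  have key : ∀ L ∈ arr V, occ (L ++ [j]) = occ L := by
    intro L hL
    rw [occ_append_of_le]
    · simp [occ, desc]
    · intro a ha y hy
      have := hV a (((mem_arr.1 hL).2 a).1 ha)
      simp at hy; omega
  symm
  refine Finset.card_bij (fun L _ => L ++ [j]) ?_ (fun _ _ _ _ h => List.append_cancel_right h) ?_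
  · intro L hL
    obtain ⟨hL, hk⟩ := Finset.mem_filter.1 hL
    refine Finset.mem_filter.2 ⟨(exists_of_mem_arr_insert hj).2 ⟨L, [], rfl, by simpa⟩,
      (key L hL).trans hk, aft_append (notMem_of_mem_arr hj hL)⟩
  · intro L hL
    obtain ⟨hL, hk, ha⟩ := Finset.mem_filter.1 hL
    obtain ⟨L₁, L₂, rfl, hL'⟩ := (exists_of_mem_arr_insert hj).1 hL
    have hn := notMem_of_mem_arr hj hL'
    rw [aft_append (fun h => hn (by simp [h])), List.length_eq_zero_iff] at ha
    subst ha
    rw [List.append_nil] at hL'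
    exact ⟨L₁, Finset.mem_filter.2 ⟨hL', (key L₁ hL').symm.trans hk⟩, rfl⟩

/-- A smallest letter `j` placed last but one takes part in no occurrence of 132. -/
theorem card_occ_add_aft_one {j : ℕ} {V : Finset ℕ} (hV : ∀ x ∈ V, j < x) (hne : V.Nonempty)
    (k : ℕ) : #{L ∈ arr (insert j V) | occ L = k ∧ aft j L = 1} = cnt V k := by
  have hj : j ∉ V := fun h => (hV j h).false
  have key : ∀ L x, L ++ [x] ∈ arr V → occ (L ++ [j, x]) = occ (L ++ [x]) := by
    intro L x hL
    have h1 : ∀ a ∈ L, j < a := fun a ha => hV a (((mem_arr.1 hL).2 a).1 (by simp [ha]))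
    have h2 : crossAsc L [j, x] = crossAsc L [x] := by
      clear hL
      induction L with
      | nil => rfl
      | cons a L ih =>
        simp only [List.forall_mem_cons] at h1
        simp [crossAsc, ih h1.2, h1.1.not_gt, List.countP_cons]
    have h3 : ∀ x, crossDesc L [j, x] = 0 ∧ crossDesc L [x] = 0 := by
      intro x
      simp only [crossDesc, List.sum_eq_zero_iff, List.mem_map]
      constructor
      · rintro _ ⟨a, ha, rfl⟩
        have := h1 a ha
        simp [desc]; omega
      · rintro _ ⟨a, ha, rfl⟩
        simp [desc]
    rw [occ_append, occ_append, h2, (h3 x).1, (h3 x).2]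
    simp [occ, desc]
  symm
  have hex : ∀ L ∈ arr V, ∃ L' x, L = L' ++ [x] := by
    intro L hL
    obtain ⟨y, hy⟩ := hne
    rcases List.eq_nil_or_concat L with rfl | ⟨L', x, rfl⟩
    · simpa using ((mem_arr.1 hL).2 y).2 hy
    · exact ⟨L', x, by simp⟩
  refine Finset.card_bij (fun L _ => L.dropLast ++ j :: L.getLast?.toList) ?_ ?_ ?_
  · intro L hL
    obtain ⟨hL, hk⟩ := Finset.mem_filter.1 hL
    obtain ⟨L, x, rfl⟩ := hex L hL
    have hn := notMem_of_mem_arr hj hL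
    simp only [List.dropLast_concat, List.getLast?_concat, Option.toList_some]
    refine Finset.mem_filter.2 ⟨(exists_of_mem_arr_insert hj).2 ⟨L, [x], rfl, hL⟩,
      (key L x hL).trans hk, aft_append fun h => hn (by simp [h])⟩
  · intro L hL L' hL' h
    obtain ⟨L, x, rfl⟩ := hex L (Finset.mem_filter.1 hL).1
    obtain ⟨L', x', rfl⟩ := hex L' (Finset.mem_filter.1 hL').1
    simp only [List.dropLast_concat, List.getLast?_concat, Option.toList_some] at h
    have := List.append_inj' h rfl
    simp_all
  · intro L hL
    obtain ⟨hL, hk, ha⟩ := Finset.mem_filter.1 hL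
    obtain ⟨L₁, L₂, rfl, hL'⟩ := (exists_of_mem_arr_insert hj).1 hL
    have hn := notMem_of_mem_arr hj hL'
    rw [aft_append (fun h => hn (by simp [h])), List.length_eq_one_iff] at ha
    obtain ⟨x, rfl⟩ := ha
    exact ⟨L₁ ++ [x], Finset.mem_filter.2 ⟨hL', (key L₁ x hL').symm.trans hk⟩, by simp⟩

/-- For the shape with one ascent, the ascent is from `j` to `j + 1`, and `crossAsc` counts the
letters `x` after `j` in `L`, each giving the occurrence `j, x, j + 1`. -/
theorem tot_one {n j : ℕ} {L R : List ℕ} (hL : L ∈ arr (insert j (Ico (j + 2) n)))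
    (hR : R ∈ arr (insert (j + 1) (range j))) :
    tot L R = (occ L + aft j L + 1) + occ R := by
  rw [tot, asc_eq_ascS hL hR, ascS_one]
  have hj : j ∉ Ico (j + 2) n := by simp
  have hRm := (mem_arr.1 hR).2
  simp only [Finset.mem_insert, Finset.mem_range] at hRm
  have hLm := (mem_arr.1 hL).2
  simp only [Finset.mem_insert, Finset.mem_Ico] at hLm
  have h1 : crossDesc L R = 0 := by
    rw [crossDesc, List.sum_eq_zero_iff]
    simp only [List.mem_map]
    rintro _ ⟨a, ha, rfl⟩
    rw [desc_eq_zero_iff, List.pairwise_iff_forall_sublist]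
    intro x y hxy
    have h1 := (hLm a).1 ha
    have h2 := (hRm x).1 (hxy.subset (by simp))
    have h3 := (hRm y).1 (hxy.subset (by simp))
    omega
  obtain ⟨L₁, L₂, rfl, hL'⟩ := (exists_of_mem_arr_insert hj).1 hL
  have hn := notMem_of_mem_arr hj hL'
  have hLm' := (mem_arr.1 hL').2
  simp only [Finset.mem_Ico, List.mem_append] at hLm'
  have h2 : crossAsc (L₁ ++ j :: L₂) R = L₂.length := by
    have hL₂ : crossAsc L₂ R = 0 := crossAsc_eq_zero fun a ha y hy => by
      have h1 := (hLm' a).1 (Or.inr ha)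
      have h2 := (hRm y).1 hy
      omega
    rw [crossAsc_append, crossAsc, hL₂, zero_add]
    · have : ∀ x ∈ L₂, R.countP (fun y => j < y ∧ y < x) = 1 := by
        intro x hx
        rw [countP_eq_card hR (fun y => j < y ∧ y < x), Finset.card_eq_one]
        have := (hLm' x).1 (Or.inr hx)
        exact ⟨j + 1, by ext y; simp; omega⟩
      rw [List.map_congr_left this]; simp
    · intro a ha y hy
      have h1 := (hLm' a).1 (Or.inl ha)
      have h2 := (hRm y).1 hy
      omega
  rw [h1, h2, aft_append (fun h => hn (by simp [h]))]
  omega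

theorem splitCnt_one_one {n j : ℕ} : splitCnt (insert j (Ico (j + 2) n))
    (insert (j + 1) (range j)) 1 = num (n - j - 2) 0 * num (j + 1) 0 := by
  have hV : ∀ x ∈ Ico (j + 2) n, j < x := by simp; omega
  rw [← cnt_eq_num (S := Ico (j + 2) n) (by simp; omega),
    ← cnt_eq_num (S := insert (j + 1) (range j)) (by rw [card_insert_of_notMem] <;> simp),
    ← card_occ_add_aft_zero hV, cnt, ← Finset.card_product, splitCnt]
  congr 1
  ext ⟨L, R⟩
  simp only [Finset.mem_filter, Finset.mem_product]
  constructor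
  · rintro ⟨⟨hL, hR⟩, h⟩
    rw [tot_one hL hR] at h
    exact ⟨⟨hL, by omega, by omega⟩, hR, by omega⟩
  · rintro ⟨⟨hL, h1, h2⟩, hR, h3⟩
    refine ⟨⟨hL, hR⟩, ?_⟩
    rw [tot_one hL hR]; omega

/-- One more occurrence is available beyond the ascent: it lies in `L`, or in `R`, or comes from a
single letter after `j` in `L`; the last case needs a second letter in `L`, that is `j + 2 < n`. -/
theorem splitCnt_one_two {n j : ℕ} : splitCnt (insert j (Ico (j + 2) n))
    (insert (j + 1) (range j)) 2 =
      num (n - j - 2) 1 * num (j + 1) 0 + num (n - j - 2) 0 * num (j + 1) 1 +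
      if j + 2 < n then num (n - j - 2) 0 * num (j + 1) 0 else 0 := by
  have hV : ∀ x ∈ Ico (j + 2) n, j < x := by simp; omega
  set A : ℕ → ℕ → Finset (List ℕ) := fun k i =>
    {L ∈ arr (insert j (Ico (j + 2) n)) | occ L = k ∧ aft j L = i} with hA
  set B : ℕ → Finset (List ℕ) := fun k => {R ∈ arr (insert (j + 1) (range j)) | occ R = k} with hB
  have hB' : ∀ k, #(B k) = num (j + 1) k := fun k =>
    cnt_eq_num (S := insert (j + 1) (range j)) (by rw [card_insert_of_notMem] <;> simp) k
  have hA0 : ∀ k, #(A k 0) = num (n - j - 2) k := fun k => by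
    rw [← cnt_eq_num (S := Ico (j + 2) n) (by simp; omega)]
    exact card_occ_add_aft_zero hV k
  have hA1 : #(A 0 1) = if j + 2 < n then num (n - j - 2) 0 else 0 := by
    split_ifs with h
    · rw [← cnt_eq_num (S := Ico (j + 2) n) (by simp; omega)]
      exact card_occ_add_aft_one hV (by simpa using h) 0
    · rw [Finset.card_eq_zero, hA, Finset.filter_eq_empty_iff]
      intro L hL
      rw [Ico_eq_empty (by omega)] at hL
      obtain ⟨L₁, L₂, rfl, hL'⟩ := (exists_of_mem_arr_insert (by simp)).1 hL
      have h0 : L₁ ++ L₂ = [] := by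
        rw [List.eq_nil_iff_forall_not_mem]
        intro x hx
        simpa using ((mem_arr.1 hL').2 x).1 hx
      obtain ⟨rfl, rfl⟩ := List.append_eq_nil_iff.1 h0
      simp [aft]
  have e : {q ∈ arr (insert j (Ico (j + 2) n)) ×ˢ arr (insert (j + 1) (range j)) |
      tot q.1 q.2 = 2} = (A 1 0 ×ˢ B 0) ∪ (A 0 0 ×ˢ B 1) ∪ (A 0 1 ×ˢ B 0) := by
    ext ⟨L, R⟩
    simp only [hA, hB, Finset.mem_filter, Finset.mem_product, Finset.mem_union]
    constructor
    · rintro ⟨⟨hL, hR⟩, h⟩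
      rw [tot_one hL hR] at h
      simp only [hL, hR, true_and]
      omega
    · intro h
      have hL : L ∈ arr (insert j (Ico (j + 2) n)) := by tauto
      have hR : R ∈ arr (insert (j + 1) (range j)) := by tauto
      refine ⟨⟨hL, hR⟩, ?_⟩
      rw [tot_one hL hR]
      simp only [hL, hR, true_and] at h
      omega
  rw [splitCnt, e, Finset.card_union_of_disjoint, Finset.card_union_of_disjoint]
  · simp only [Finset.card_product, hB', hA0, hA1, ite_mul, zero_mul]
  · rw [Finset.disjoint_left]
    rintro ⟨L, R⟩
    simp only [hA, hB, Finset.mem_filter, Finset.mem_product]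
    omega
  · rw [Finset.disjoint_left]
    rintro ⟨L, R⟩
    simp only [hA, hB, Finset.mem_filter, Finset.mem_product, Finset.mem_union]
    omega

end Evaluate

/-! ### Counting the pairs with two ascents, and the recurrences -/

section EvaluateTwo

/-- Both ascents end at `j + 2`. No letter above `j + 2` may follow `j` or `j + 1` in `L`, so `L`
ends with these two letters, in either order, and `L` and `R` contain no 132. -/
theorem splitCnt_two_a {n j : ℕ} :
    splitCnt (insert j (insert (j + 1) (Ico (j + 3) n))) (insert (j + 2) (range j)) 2 =
      2 * (num (n - j - 3) 0 * num (j + 1) 0) := by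
  set V := Ico (j + 3) n with hV
  set U := insert (j + 2) (range j) with hU
  have hVm : ∀ x ∈ V, j + 3 ≤ x := by simp [hV]; omega
  have hj0 : j ∉ insert (j + 1) V := by simp [hV]
  have hj1 : j + 1 ∉ V := by simp [hV]
  have hj2 : j ∉ V := by simp [hV]
  have hocc : ∀ l ∈ arr V, occ (l ++ [j, j + 1]) = occ l ∧ occ (l ++ [j + 1, j]) = occ l := by
    intro l hl
    have h1 : ∀ a ∈ l, j + 3 ≤ a := fun a ha => hVm a (((mem_arr.1 hl).2 a).1 ha)
    constructor <;>
    · rw [occ_append_of_le]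
      · simp [occ, desc]
      · intro a ha y hy
        have := h1 a ha
        simp at hy; omega
  have e : {q ∈ arr (insert j (insert (j + 1) V)) ×ˢ arr U | tot q.1 q.2 = 2} =
      ((({l ∈ arr V | occ l = 0}).image fun l => l ++ [j, j + 1]) ∪
        (({l ∈ arr V | occ l = 0}).image fun l => l ++ [j + 1, j])) ×ˢ {R ∈ arr U | occ R = 0} := by
    ext ⟨L, R⟩
    simp only [Finset.mem_filter, Finset.mem_product, Finset.mem_union, Finset.mem_image]
    have htot : L ∈ arr (insert j (insert (j + 1) V)) → R ∈ arr U →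
        tot L R = occ L + occ R + 2 + crossAsc L R := by
      intro hL hR
      rw [tot, asc_eq_ascS hL hR, ascS_two_a]
      have : crossDesc L R = 0 := by
        rw [crossDesc, List.sum_eq_zero_iff]
        simp only [List.mem_map]
        rintro _ ⟨a, ha, rfl⟩
        rw [desc_eq_zero_iff, List.pairwise_iff_forall_sublist]
        intro x y hxy
        have h1 := ((mem_arr.1 hL).2 a).1 ha
        have h2 := ((mem_arr.1 hR).2 x).1 (hxy.subset (by simp))
        have h3 := ((mem_arr.1 hR).2 y).1 (hxy.subset (by simp))
        simp [hU, hV] at h1 h2 h3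
        omega
      omega
    constructor
    · rintro ⟨⟨hL, hR⟩, h⟩
      rw [htot hL hR] at h
      have hc : crossAsc L R = 0 := by omega
      refine ⟨?_, hR, by omega⟩
      have hyR : j + 2 ∈ R := ((mem_arr.1 hR).2 _).2 (by simp [hU])
      rw [crossAsc_eq_zero_iff] at hc
      obtain ⟨L₁, L₂, rfl, hL'⟩ := (exists_of_mem_arr_insert hj0).1 hL
      obtain ⟨L₃, L₄, h34, hL''⟩ := (exists_of_mem_arr_insert hj1).1 hL'
      have hm : ∀ x, x ∈ L₁ ∨ x ∈ L₂ ↔ x = j + 1 ∨ x ∈ V := by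
        simpa using (mem_arr.1 hL').2
      have hnd := (mem_arr.1 hL').1
      rw [List.pairwise_append, List.pairwise_cons] at hc
      obtain ⟨hc1, ⟨hc2, -⟩, hc3⟩ := hc
      have h2 : ∀ x ∈ L₂, x = j + 1 := by
        intro x hx
        have h3 := hc2 x hx (j + 2) hyR
        rcases (hm x).1 (Or.inr hx) with h | h
        · exact h
        · have := hVm x h; omega
      rcases L₂ with _ | ⟨x, L₂⟩
      · right
        -- `j` is last, so `j + 1` has to come just before it
        rw [List.append_nil] at h34
        subst h34
        rw [List.pairwise_append, List.pairwise_cons] at hc1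
        have h4 : L₄ = [] := by
          rw [List.eq_nil_iff_forall_not_mem]
          intro x hx
          have h5 := hc1.2.1.1 x hx (j + 2) hyR
          have h6 := hVm x (((mem_arr.1 hL'').2 x).1 (by simp [hx]))
          omega
        subst h4
        rw [List.append_nil] at hL''
        have h8 : (L₃ ++ [j + 1]) ++ [j] = L₃ ++ [j + 1, j] := by simp
        refine ⟨L₃, ⟨hL'', ?_⟩, h8.symm⟩
        rw [← (hocc L₃ hL'').2, ← h8]; omega
      · left
        obtain rfl := h2 x (by simp)
        have h3 : L₂ = [] := by
          rw [List.eq_nil_iff_forall_not_mem]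
          intro y hy
          obtain rfl := h2 y (by simp [hy])
          have := (List.nodup_append.1 hnd).2.1
          rw [List.nodup_cons] at this
          exact this.1 hy
        subst h3
        have hL3 : L₁ ∈ arr V := by
          obtain ⟨M₁, M₂, hM, hM'⟩ := (exists_of_mem_arr_insert hj1).1 hL'
          have h9 : j + 1 ∉ L₁ := fun h => by
            have := (List.nodup_append.1 hnd).2.2 _ h (j + 1) (by simp)
            exact this rfl
          obtain ⟨rfl, -, rfl⟩ := (List.append_cons_inj_of_notMem
            (fun h => notMem_of_mem_arr hj1 hM' (by simp [h]))
            (fun h => notMem_of_mem_arr hj1 hM' (by simp [h]))).1 hM.symm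
          simpa using hM'
        refine ⟨L₁, ⟨hL3, ?_⟩, rfl⟩
        rw [← (hocc L₁ hL3).1]; omega
    · rintro ⟨h, hR, hR0⟩
      have hRm := (mem_arr.1 hR).2
      rcases h with ⟨l, ⟨hl, hl0⟩, rfl⟩ | ⟨l, ⟨hl, hl0⟩, rfl⟩
      · have hL : l ++ [j, j + 1] ∈ arr (insert j (insert (j + 1) V)) :=
          (exists_of_mem_arr_insert hj0).2 ⟨l, [j + 1], rfl,
            (exists_of_mem_arr_insert hj1).2 ⟨l, [], rfl, by simpa⟩⟩
        refine ⟨⟨hL, hR⟩, ?_⟩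
        rw [htot hL hR, (hocc l hl).1, hl0, hR0, crossAsc_append, crossAsc_eq_zero_iff.2]
        · simp
        · intro a ha y hy
          have h1 := hVm a (((mem_arr.1 hl).2 a).1 ha)
          have h2 := (hRm y).1 hy
          simp [hU] at h2; omega
      · have hL : l ++ [j + 1, j] ∈ arr (insert j (insert (j + 1) V)) :=
          (exists_of_mem_arr_insert hj0).2 ⟨l ++ [j + 1], [], by simp,
            (exists_of_mem_arr_insert hj1).2 ⟨l, [], by simp, by simpa⟩⟩
        refine ⟨⟨hL, hR⟩, ?_⟩
        rw [htot hL hR, (hocc l hl).2, hl0, hR0, crossAsc_append, crossAsc_eq_zero_iff.2]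
        · simp; omega
        · intro a ha y hy
          have h1 := hVm a (((mem_arr.1 hl).2 a).1 ha)
          have h2 := (hRm y).1 hy
          simp [hU] at h2; omega
  rw [splitCnt, e, Finset.card_product, Finset.card_union_of_disjoint,
    Finset.card_image_of_injective _ (fun _ _ h => List.append_cancel_right h),
    Finset.card_image_of_injective _ (fun _ _ h => List.append_cancel_right h)]
  · change (cnt V 0 + cnt V 0) * cnt U 0 = _
    rw [cnt_eq_num (S := V) (m := n - j - 3) (by simp [hV]; omega),
      cnt_eq_num (S := U) (m := j + 1) (by rw [hU, card_insert_of_notMem] <;> simp)]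
    ring
  · rw [Finset.disjoint_left]
    simp only [Finset.mem_image]
    rintro _ ⟨l, -, rfl⟩ ⟨l', -, h⟩
    have := (List.append_inj' h rfl).2
    simp at this

/-- Among the 132-avoiding arrangements of `{0, …, j - 1, j + 1, j + 2}`, those with `j + 2` before
`j + 1` must start with `j + 2`, as any earlier letter would begin an occurrence. Removing it leaves
an arbitrary 132-avoiding arrangement of the other `j + 1` letters. -/
theorem card_desc_eq_zero (j : ℕ) :
    #{R ∈ arr (insert (j + 1) (insert (j + 2) (range j))) | occ R = 0 ∧ desc j R = 0} +
      num (j + 1) 0 = num (j + 2) 0 := by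
  set U := insert (j + 1) (insert (j + 2) (range j)) with hU
  set U' := insert (j + 1) (range j) with hU'
  have hUU' : U = insert (j + 2) U' := by rw [hU, hU', Finset.insert_comm]
  have hj : j + 2 ∉ U' := by simp [hU']
  have hU'm : ∀ x ∈ U', x < j + 2 := by simp [hU']; omega
  rw [← cnt_eq_num (S := U) (m := j + 2)
      (by rw [hUU', card_insert_of_notMem hj, hU', card_insert_of_notMem] <;> simp),
    ← cnt_eq_num (S := U') (m := j + 1) (by rw [hU', card_insert_of_notMem] <;> simp),
    cnt, cnt, ← Finset.card_filter_add_card_filter_not (s := {R ∈ arr U | occ R = 0})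
      (fun R => desc j R = 0), Finset.filter_filter, Finset.filter_filter, Nat.add_left_cancel_iff]
  refine Finset.card_bij (fun R _ => (j + 2) :: R) ?_ (fun _ _ _ _ h => (List.cons.inj h).2) ?_
  · intro R hR
    obtain ⟨hR, hR0⟩ := Finset.mem_filter.1 hR
    have hm := (mem_arr.1 hR).2
    refine Finset.mem_filter.2 ⟨?_, ?_, ?_⟩
    · rw [hUU']
      exact (exists_of_mem_arr_insert hj).2 ⟨[], R, rfl, hR⟩
    · rw [occ, hR0, desc_eq_zero_of_forall_le]
      exact fun x hx => (hU'm x ((hm x).1 hx)).le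
    · rw [desc_eq_zero_iff, List.pairwise_cons]
      intro h
      have := h.1 (j + 1) ((hm _).2 (by simp [hU']))
      omega
  · intro R hR
    obtain ⟨hR, hR0, hd⟩ := Finset.mem_filter.1 hR
    rw [hUU'] at hR
    obtain ⟨R₁, R₂, rfl, hR'⟩ := (exists_of_mem_arr_insert hj).1 hR
    have hm := (mem_arr.1 hR').2
    have hR1m : ∀ x ∈ R₁, x < j + 2 := fun x hx => hU'm x ((hm x).1 (by simp [hx]))
    have hR2m : ∀ x ∈ R₂, x < j + 2 := fun x hx => hU'm x ((hm x).1 (by simp [hx]))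
    have h1 : j + 1 ∈ R₂ := by
      by_contra h1
      apply hd
      rw [desc_eq_zero_iff, List.pairwise_append, List.pairwise_cons,
        List.pairwise_iff_forall_sublist, List.pairwise_iff_forall_sublist]
      refine ⟨fun {x y} h => ?_, ⟨fun y hy => ?_, fun {x y} h => ?_⟩, fun x hx y hy => ?_⟩
      · have := hR1m x (h.subset (by simp)); omega
      · have := hR2m y hy
        rintro ⟨h2, -⟩
        obtain rfl : y = j + 1 := by omega
        exact h1 hy
      · have := hR2m x (h.subset (by simp)); omega
      · have := hR1m x hx; omega
    have h2 : R₁ = [] := by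
      rw [List.eq_nil_iff_forall_not_mem]
      intro x hx
      rw [occ_append, Nat.add_eq_zero_iff, crossDesc, List.sum_eq_zero_iff] at hR0
      have h3 := hR0.2 (desc x ((j + 2) :: R₂)) (List.mem_map_of_mem hx)
      rw [desc_eq_zero_iff, List.pairwise_cons] at h3
      have h4 := h3.1 (j + 1) h1
      have h5 := hR1m x hx
      have h6 : x ≠ j + 1 := by
        rintro rfl
        exact (List.nodup_append.1 (mem_arr.1 hR').1).2.2 _ hx _ h1 rfl
      omega
    subst h2
    refine ⟨R₂, Finset.mem_filter.2 ⟨hR', ?_⟩, rfl⟩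
    rw [List.nil_append, occ] at hR0
    omega

/-- Both ascents start at `j`. Then `j` must come last in `L`, and `j + 1` must precede `j + 2` in
`R`. Stated additively, as the count is a multiple of a difference. -/
theorem splitCnt_two_b {n j : ℕ} :
    splitCnt (insert j (Ico (j + 3) n)) (insert (j + 1) (insert (j + 2) (range j))) 2 +
      num (n - j - 3) 0 * num (j + 1) 0 = num (n - j - 3) 0 * num (j + 2) 0 := by
  rw [← card_desc_eq_zero, mul_add, Nat.add_right_cancel_iff]
  set V := Ico (j + 3) n with hV
  set U := insert (j + 1) (insert (j + 2) (range j)) with hU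
  have hVm : ∀ x ∈ V, j + 3 ≤ x := by simp [hV]; omega
  have hjV : j ∉ V := by simp [hV]
  rw [← cnt_eq_num (S := V) (m := n - j - 3) (by simp [hV]; omega),
    ← card_occ_add_aft_zero (j := j) (V := V) (fun x hx => by have := hVm x hx; omega),
    ← Finset.card_product, splitCnt]
  congr 1
  ext ⟨L, R⟩
  simp only [Finset.mem_filter, Finset.mem_product]
  have key : L ∈ arr (insert j V) → R ∈ arr U →
      (tot L R = 2 ↔ occ L = 0 ∧ aft j L = 0 ∧ occ R = 0 ∧ desc j R = 0) := by
    intro hL hR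
    rw [tot, asc_eq_ascS hL hR, ascS_two_b]
    have hRm : ∀ y ∈ R, y ≤ j + 2 := fun y hy => by
      have := ((mem_arr.1 hR).2 y).1 hy
      simp [hU] at this; omega
    have hyR : j + 1 ∈ R := ((mem_arr.1 hR).2 _).2 (by simp [hU])
    obtain ⟨L₁, L₂, rfl, hL'⟩ := (exists_of_mem_arr_insert hjV).1 hL
    have hm := (mem_arr.1 hL').2
    have hn := notMem_of_mem_arr hjV hL'
    have hL1 : ∀ a ∈ L₁, j + 3 ≤ a := fun a ha => hVm a ((hm a).1 (by simp [ha]))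
    have hL2 : ∀ a ∈ L₂, j + 3 ≤ a := fun a ha => hVm a ((hm a).1 (by simp [ha]))
    have h1 : crossDesc (L₁ ++ j :: L₂) R = desc j R := by
      have e1 : crossDesc L₁ R = 0 := crossDesc_eq_zero fun a ha y hy => by
        have := hL1 a ha
        have := hRm y hy
        omega
      have e2 : crossDesc L₂ R = 0 := crossDesc_eq_zero fun a ha y hy => by
        have := hL2 a ha
        have := hRm y hy
        omega
      simp only [crossDesc] at e1 e2
      simp [crossDesc, e1, e2]
    have h2 : crossAsc (L₁ ++ j :: L₂) R = 0 ↔ aft j (L₁ ++ j :: L₂) = 0 := by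
      rw [crossAsc_append, aft_append (fun h => hn (by simp [h])), List.length_eq_zero_iff,
        crossAsc_eq_zero_iff]
      · constructor
        · intro h
          rw [List.pairwise_cons] at h
          rw [List.eq_nil_iff_forall_not_mem]
          intro x hx
          have h3 := h.1 x hx _ hyR
          have := hL2 x hx
          omega
        · rintro rfl
          simp
      · intro a ha y hy
        have := hL1 a ha
        have := hRm y hy
        omega
    rw [h1, ← h2]
    omega
  constructor
  · rintro ⟨⟨hL, hR⟩, h⟩
    have := (key hL hR).1 h
    tauto
  · rintro ⟨⟨hL, h1, h2⟩, hR, h3, h4⟩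
    exact ⟨⟨hL, hR⟩, (key hL hR).2 ⟨h1, h2, h3, h4⟩⟩

theorem num_zero_succ (n : ℕ) :
    num (n + 1) 0 = ∑ j ∈ range (n + 1), num (n - j) 0 * num j 0 := by
  rw [num_succ, sum_powerset_range n _ fun T _ h => splitCnt_eq_zero (by omega)]
  have h1 : ∀ j ∈ range (n - 1), splitCnt (insert j (Ico (j + 2) n))
      (range n \ insert j (Ico (j + 2) n)) 0 = 0 := fun j hj => by
    rw [mem_range] at hj
    rw [compl_one (by omega)]
    exact splitCnt_eq_zero (by rw [ascS_one]; omega)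
  have h2 : ∀ j ∈ range (n - 2), splitCnt (insert j (insert (j + 1) (Ico (j + 3) n)))
      (range n \ insert j (insert (j + 1) (Ico (j + 3) n))) 0 = 0 := fun j hj => by
    rw [mem_range] at hj
    rw [compl_two_a (by omega)]
    exact splitCnt_eq_zero (by rw [ascS_two_a]; omega)
  have h3 : ∀ j ∈ range (n - 2), splitCnt (insert j (Ico (j + 3) n))
      (range n \ insert j (Ico (j + 3) n)) 0 = 0 := fun j hj => by
    rw [mem_range] at hj
    rw [compl_two_b (by omega)]
    exact splitCnt_eq_zero (by rw [ascS_two_b]; omega)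
  rw [sum_eq_zero h1, sum_eq_zero h2, sum_eq_zero h3]
  simp only [add_zero]
  refine sum_congr rfl fun j hj => ?_
  rw [mem_range] at hj
  rw [compl_zero (by omega), splitCnt_zero]
  simp

theorem num_one_succ (n : ℕ) :
    num (n + 1) 1 = ∑ j ∈ range (n + 1), (num (n - j) 0 * num j 1 + num (n - j) 1 * num j 0) +
      ∑ j ∈ range (n - 1), num (n - j - 2) 0 * num (j + 1) 0 := by
  rw [num_succ, sum_powerset_range n _ fun T _ h => splitCnt_eq_zero (by omega)]
  have h1 : ∀ j ∈ range (n - 1), splitCnt (insert j (Ico (j + 2) n))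
      (range n \ insert j (Ico (j + 2) n)) 1 = num (n - j - 2) 0 * num (j + 1) 0 := fun j hj => by
    rw [mem_range] at hj
    rw [compl_one (by omega), splitCnt_one_one]
  have h2 : ∀ j ∈ range (n - 2), splitCnt (insert j (insert (j + 1) (Ico (j + 3) n)))
      (range n \ insert j (insert (j + 1) (Ico (j + 3) n))) 1 = 0 := fun j hj => by
    rw [mem_range] at hj
    rw [compl_two_a (by omega)]
    exact splitCnt_eq_zero (by rw [ascS_two_a]; omega)
  have h3 : ∀ j ∈ range (n - 2), splitCnt (insert j (Ico (j + 3) n))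
      (range n \ insert j (Ico (j + 3) n)) 1 = 0 := fun j hj => by
    rw [mem_range] at hj
    rw [compl_two_b (by omega)]
    exact splitCnt_eq_zero (by rw [ascS_two_b]; omega)
  rw [sum_congr rfl h1, sum_eq_zero h2, sum_eq_zero h3]
  simp only [add_zero]
  congr 1
  refine sum_congr rfl fun j hj => ?_
  rw [mem_range] at hj
  rw [compl_zero (by omega), splitCnt_zero, Finset.Nat.sum_antidiagonal_eq_sum_range_succ_mk]
  simp [sum_range_succ]

theorem num_two_succ (n : ℕ) :
    (num (n + 1) 2 : ℚ) = ∑ j ∈ range (n + 1), ((num (n - j) 0 : ℚ) * num j 2 +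
        num (n - j) 1 * num j 1 + num (n - j) 2 * num j 0) +
      ∑ j ∈ range (n - 1), ((num (n - j - 2) 1 : ℚ) * num (j + 1) 0 +
        num (n - j - 2) 0 * num (j + 1) 1) +
      ∑ j ∈ range (n - 2), ((num (n - j - 2) 0 : ℚ) * num (j + 1) 0 +
        2 * (num (n - j - 3) 0 * num (j + 1) 0) +
        num (n - j - 3) 0 * (num (j + 2) 0 - num (j + 1) 0)) := by
  rw [num_succ, sum_powerset_range n _ fun T _ h => splitCnt_eq_zero (by omega)]
  push_cast
  have h1 : ∑ j ∈ range (n - 1), (splitCnt (insert j (Ico (j + 2) n))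
      (range n \ insert j (Ico (j + 2) n)) 2 : ℚ) =
      ∑ j ∈ range (n - 1), ((num (n - j - 2) 1 : ℚ) * num (j + 1) 0 +
        num (n - j - 2) 0 * num (j + 1) 1) +
      ∑ j ∈ range (n - 2), (num (n - j - 2) 0 : ℚ) * num (j + 1) 0 := by
    have e : ∑ j ∈ range (n - 2), (num (n - j - 2) 0 : ℚ) * num (j + 1) 0 =
        ∑ j ∈ range (n - 1), if j + 2 < n then (num (n - j - 2) 0 : ℚ) * num (j + 1) 0 else 0 := by
      rw [← sum_filter]
      refine sum_congr ?_ fun _ _ => rfl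
      ext j; simp; omega
    rw [e, ← sum_add_distrib]
    refine sum_congr rfl fun j hj => ?_
    rw [mem_range] at hj
    rw [compl_one (by omega), splitCnt_one_two]
    push_cast
    rfl
  have h2 : ∀ j ∈ range (n - 2), (splitCnt (insert j (insert (j + 1) (Ico (j + 3) n)))
      (range n \ insert j (insert (j + 1) (Ico (j + 3) n))) 2 : ℚ) =
      2 * (num (n - j - 3) 0 * num (j + 1) 0) := fun j hj => by
    rw [mem_range] at hj
    rw [compl_two_a (by omega), splitCnt_two_a]
    push_cast
    rfl
  have h3 : ∀ j ∈ range (n - 2), (splitCnt (insert j (Ico (j + 3) n))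
      (range n \ insert j (Ico (j + 3) n)) 2 : ℚ) =
      num (n - j - 3) 0 * (num (j + 2) 0 - num (j + 1) 0) := fun j hj => by
    rw [mem_range] at hj
    rw [compl_two_b (by omega)]
    have := splitCnt_two_b (n := n) (j := j)
    have h : ((_ + _ : ℕ) : ℚ) = _ := congrArg Nat.cast this
    push_cast at h
    linarith
  have h0 : ∀ j ∈ range (n + 1), (splitCnt (Ico j n) (range n \ Ico j n) 2 : ℚ) =
      (num (n - j) 0 : ℚ) * num j 2 + num (n - j) 1 * num j 1 + num (n - j) 2 * num j 0 :=
    fun j hj => by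
      rw [mem_range] at hj
      rw [compl_zero (by omega), splitCnt_zero, Finset.Nat.sum_antidiagonal_eq_sum_range_succ_mk]
      simp [sum_range_succ]
  rw [h1, sum_congr rfl h2, sum_congr rfl h3, sum_congr rfl h0]
  simp only [sum_add_distrib]
  ring

end EvaluateTwo

/-! ### Generating functions -/

section Series

open PowerSeries

/-- The coefficients of a shifted product, in the form in which the convolutions appear in the
recurrences. The range is empty when `d > n`. -/
theorem coeff_conv (f g : ℕ → ℚ) (d n : ℕ) :
    coeff (n + 1) (X * (X ^ d * (PowerSeries.mk f * PowerSeries.mk g))) =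
      ∑ j ∈ range (n + 1 - d), f (n - j - d) * g j := by
  rw [coeff_succ_X_mul, coeff_X_pow_mul']
  split_ifs with h
  · obtain ⟨m, rfl⟩ := Nat.exists_eq_add_of_le h
    rw [Nat.add_sub_cancel_left, mul_comm (PowerSeries.mk f), coeff_mul,
      Finset.Nat.sum_antidiagonal_eq_sum_range_succ_mk]
    simp only [coeff_mk]
    refine sum_congr (by congr 1; omega) fun j _ => ?_
    rw [mul_comm, show d + m - j - d = m - j by omega]
  · rw [show n + 1 - d = 0 by omega]; simp

/-- The generating function of `num (n + i) k`, that is of the sequence `num · k` with its first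
`i` terms removed. -/
def ser (i k : ℕ) : PowerSeries ℚ := PowerSeries.mk fun n => (num (n + i) k : ℚ)

theorem num_zero (k : ℕ) : num 0 k = if k = 0 then 1 else 0 := by
  have h : arr (univ : Finset (Fin 0)) = {[]} := by
    ext l
    rw [mem_arr, mem_singleton]
    rcases l with _ | ⟨x, l⟩
    · simp
    · exact x.elim0
  rw [num, cnt, h, filter_singleton]
  rcases k with _ | k <;> simp [occ]

theorem num_zero_zero : num 0 0 = 1 := num_zero 0
theorem num_zero_one : num 0 1 = 0 := num_zero 1
theorem num_zero_two : num 0 2 = 0 := num_zero 2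
theorem num_one_zero : num 1 0 = 1 := by simp [num_zero_succ 0, num_zero_zero]

theorem X_mul_ser (i k : ℕ) : X * ser (i + 1) k = ser i k - C (num i k : ℚ) := by
  ext n
  rcases n with _ | n
  · simp [ser]
  · rw [coeff_succ_X_mul, map_sub, coeff_C]
    simp [ser, show n + (i + 1) = n + 1 + i by omega]

theorem ser_zero_eq : ser 0 0 = 1 + X * ser 0 0 ^ 2 := by
  ext n
  rcases n with _ | n
  · simp [ser, num_zero_zero]
  · have h : (1 : PowerSeries ℚ) + X * ser 0 0 ^ 2 = 1 + X * (X ^ 0 * (ser 0 0 * ser 0 0)) := by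
      ring
    rw [h, map_add, ser, coeff_conv, coeff_mk, add_zero, num_zero_succ, coeff_one]
    simp

theorem ser_one_eq : ser 0 1 = 2 * X * ser 0 0 * ser 0 1 + X ^ 3 * ser 0 0 * ser 1 0 := by
  have h : 2 * X * ser 0 0 * ser 0 1 + X ^ 3 * ser 0 0 * ser 1 0 =
      X * (X ^ 0 * (ser 0 0 * ser 0 1)) + X * (X ^ 0 * (ser 0 1 * ser 0 0)) +
        X * (X ^ 2 * (ser 0 0 * ser 1 0)) := by ring
  rw [h]
  ext n
  rcases n with _ | n
  · simp [ser, num_zero_one]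
  · simp only [ser, map_add, coeff_conv]
    simp only [coeff_mk, add_zero, num_one_succ, Nat.cast_add, Nat.cast_sum, Nat.cast_mul,
      sum_add_distrib, Nat.sub_zero]
    rfl

theorem ser_two_eq : ser 0 2 = X * (2 * ser 0 0 * ser 0 2 + ser 0 1 ^ 2) +
    X ^ 3 * (ser 0 1 * ser 1 0 + ser 0 0 * ser 1 1) +
    X ^ 4 * (ser 1 0 ^ 2 + 2 * ser 0 0 * ser 1 0 + ser 0 0 * (ser 2 0 - ser 1 0)) := by
  have h : X * (2 * ser 0 0 * ser 0 2 + ser 0 1 ^ 2) +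
      X ^ 3 * (ser 0 1 * ser 1 0 + ser 0 0 * ser 1 1) +
      X ^ 4 * (ser 1 0 ^ 2 + 2 * ser 0 0 * ser 1 0 + ser 0 0 * (ser 2 0 - ser 1 0)) =
      (X * (X ^ 0 * (ser 0 0 * ser 0 2)) + X * (X ^ 0 * (ser 0 1 * ser 0 1)) +
        X * (X ^ 0 * (ser 0 2 * ser 0 0))) +
      (X * (X ^ 2 * (ser 0 1 * ser 1 0)) + X * (X ^ 2 * (ser 0 0 * ser 1 1))) +
      (X * (X ^ 3 * (ser 1 0 * ser 1 0)) + X * (X ^ 3 * (ser 0 0 * ser 1 0)) +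
        X * (X ^ 3 * (ser 0 0 * ser 2 0))) := by ring
  rw [h]
  ext n
  rcases n with _ | n
  · simp [ser, num_zero_two]
  · simp only [ser, map_add, coeff_conv]
    simp only [coeff_mk, add_zero, num_two_succ, Nat.sub_zero]
    have e1 : n + 1 - 2 = n - 1 := by omega
    have e2 : n + 1 - 3 = n - 2 := by omega
    rw [e1, e2]
    simp only [← sum_add_distrib]
    congr 1
    refine sum_congr rfl fun j hj => ?_
    rw [mem_range] at hj
    rw [show n - j - 3 + 1 = n - j - 2 by omega]
    ring

/-- With `U = X * A` and `S = 1 - 2 * U`, the equations for `B` and `D` read `S * B = U ^ 3` and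
`S * D = X * B ^ 2 + …`. Multiplying the second by `S ^ 3` removes `B`; what remains is reduced modulo
`U ^ 2 = U - X`, which also gives `S ^ 2 = 1 - 4 * X`. -/
theorem ser_two_closed : (1 - 4 * X) ^ 2 * ser 0 2 =
    2 * X - 13 * X ^ 2 + 18 * X ^ 3 + 9 * X ^ 4 +
      (-2 * X + 15 * X ^ 2 - 29 * X ^ 3 + 4 * X ^ 4 - 2 * X ^ 5) * ser 0 0 := by
  have hA := ser_zero_eq
  have hB := ser_one_eq
  have hC := ser_two_eq
  have hA1 : ser 1 0 = ser 0 0 ^ 2 := by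
    have h := X_mul_ser 0 0
    rw [num_zero_zero, Nat.cast_one, map_one] at h
    refine mul_left_cancel₀ (X_ne_zero (R := ℚ)) ?_
    linear_combination h + hA
  have hA2 : X * ser 2 0 = ser 1 0 - 1 := by
    simpa [num_one_zero] using X_mul_ser 1 0
  have hB1 : X * ser 1 1 = ser 0 1 := by
    simpa [num_zero_one] using X_mul_ser 0 1
  generalize ser 0 0 = A at *
  generalize ser 0 1 = B at *
  generalize ser 0 2 = D at *
  generalize ser 1 0 = A1 at *
  generalize ser 2 0 = A2 at *
  generalize ser 1 1 = B1 at *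
  subst hA1
  generalize (X : PowerSeries ℚ) = x at *
  have hU : (x * A) ^ 2 = x * A - x := by linear_combination (-x) * hA
  have hSB : (1 - 2 * (x * A)) * B = (x * A) ^ 3 := by linear_combination hB
  have hSD : (1 - 2 * (x * A)) * D = x * B ^ 2 + x * (x * A) ^ 2 * B + x * (x * A) * B +
      (x * A) ^ 4 + x * (x * A) ^ 3 + (x * A) ^ 3 - x ^ 2 * (x * A) := by
    linear_combination hC + x ^ 3 * A * hA2 + x ^ 2 * A * hB1
  have hg : (-2 * x + 15 * x ^ 2 - 29 * x ^ 3 + 4 * x ^ 4 - 2 * x ^ 5) * A =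
    (-2 + 15 * x - 29 * x ^ 2 + 4 * x ^ 3 - 2 * x ^ 4) * (x * A) := by ring
  rw [hg]
  generalize x * A = U at *
  have hS : (1 - 2 * U) ^ 2 = 1 - 4 * x := by linear_combination 4 * hU
  have h4 : (1 - 2 * U) ^ 4 * D = (1 - 2 * U) * (x * ((1 - 2 * U) * B) ^ 2 +
      (1 - 2 * U) * (x * U ^ 2 + x * U) * ((1 - 2 * U) * B) +
      (1 - 2 * U) ^ 2 * (U ^ 4 + x * U ^ 3 + U ^ 3 - x ^ 2 * U)) := by
    linear_combination (1 - 2 * U) ^ 3 * hSD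
  rw [hSB, show (1 - 2 * U) ^ 4 = ((1 - 2 * U) ^ 2) ^ 2 by ring, hS] at h4
  rw [h4]
  -- the coefficient is the quotient in the division by `U ^ 2 - U + x`, as polynomials in `U`
  linear_combination (-2 + 13 * x - 18 * x ^ 2 - 9 * x ^ 3 +
    (-2 + 10 * x - 9 * x ^ 2 + 2 * x ^ 3) * U + (-3 + 11 * x + 3 * x ^ 2) * U ^ 2 +
    (-2 + 8 * x - 2 * x ^ 2) * U ^ 3 + 3 * x * U ^ 4 + 2 * x * U ^ 5) * hU

end Series

/-! ### The closed formula -/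

section ClosedForm

open PowerSeries

theorem num_zero_eq_catalan (n : ℕ) : num n 0 = catalan n := by
  induction n using Nat.strong_induction_on with
  | _ n ih =>
    rcases n with _ | n
    · rw [num_zero_zero, catalan_zero]
    · rw [num_zero_succ, catalan_succ, ← Fin.sum_univ_eq_sum_range fun j => num (n - j) 0 * num j 0]
      refine sum_congr rfl fun j _ => ?_
      rw [ih j (by omega), ih (n - j) (by omega), mul_comm]

theorem catalan_rec (n : ℕ) : ((n : ℚ) + 2) * catalan (n + 1) = 2 * (2 * n + 1) * catalan n := by
  have h0 := succ_mul_catalan_eq_centralBinom n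
  have h1 := succ_mul_catalan_eq_centralBinom (n + 1)
  have h2 := Nat.succ_mul_centralBinom_succ n
  rw [← h0, ← h1] at h2
  have h3 : (n + 1) * ((n + 2) * catalan (n + 1)) =
      (n + 1) * (2 * (2 * n + 1) * catalan n) := by linarith
  exact_mod_cast Nat.eq_of_mul_eq_mul_left n.succ_pos h3

theorem catalan_factorial (n : ℕ) :
    (catalan n : ℚ) * (n.factorial * (n + 1).factorial) = (2 * n).factorial := by
  have h0 := succ_mul_catalan_eq_centralBinom n
  have h1 := Nat.add_choose_mul_factorial_mul_factorial n n
  rw [← two_mul, ← Nat.centralBinom_eq_two_mul_choose, ← h0] at h1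
  rw [← h1, Nat.factorial_succ]
  push_cast
  ring

/-- `ser_two_closed` written as a combination of shifted series, ready for comparing coefficients. -/
theorem ser_two_expanded : ser 0 2 - C 8 * (X ^ 1 * ser 0 2) + C 16 * (X ^ 2 * ser 0 2) =
    C 2 * X ^ 1 - C 13 * X ^ 2 + C 18 * X ^ 3 + C 9 * X ^ 4 +
      (C (-2) * (X ^ 1 * ser 0 0) + C 15 * (X ^ 2 * ser 0 0) - C 29 * (X ^ 3 * ser 0 0) +
        C 4 * (X ^ 4 * ser 0 0) - C 2 * (X ^ 5 * ser 0 0)) := by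
  have h := ser_two_closed
  simp only [map_neg, map_ofNat]
  linear_combination h

theorem num_two_rec (n : ℕ) : (num (n + 6) 2 : ℚ) = 8 * num (n + 5) 2 - 16 * num (n + 4) 2 -
    2 * catalan (n + 5) + 15 * catalan (n + 4) - 29 * catalan (n + 3) + 4 * catalan (n + 2) -
    2 * catalan (n + 1) := by
  have h := congrArg (coeff (n + 6)) ser_two_expanded
  simp only [map_add, map_sub, coeff_C_mul, coeff_X_pow_mul', coeff_X_pow, ser, coeff_mk,
    num_zero_eq_catalan, add_zero] at h
  simp [show ∀ k < 6, k ≤ n + 6 by omega, show ∀ k < 6, n + 6 ≠ k by omega] at h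
  linarith

theorem num_two_small : num 4 2 = 4 ∧ num 5 2 = 23 := by
  have h := fun N => congrArg (coeff N) ser_two_expanded
  simp only [map_add, map_sub, coeff_C_mul, coeff_X_pow_mul', coeff_X_pow, ser, coeff_mk,
    num_zero_eq_catalan, add_zero] at h
  have c4 : catalan 4 = 14 := by
    have := catalan_rec 3
    rw [catalan_three] at this
    have h : (catalan 4 : ℚ) = 14 := by norm_num at this; linarith
    exact_mod_cast h
  have h0 := h 0
  have h1 := h 1
  have h2 := h 2
  have h3 := h 3
  have h4 := h 4
  have h5 := h 5
  norm_num [catalan_zero, catalan_one, catalan_two, catalan_three, c4] at h0 h1 h2 h3 h4 h5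
  have h0' : (num 0 2 : ℚ) = 0 := by exact_mod_cast h0
  have e1 : (num 1 2 : ℚ) = 0 := by linarith
  have e2 : (num 2 2 : ℚ) = 0 := by linarith
  have e3 : (num 3 2 : ℚ) = 0 := by linarith
  have e4 : (num 4 2 : ℚ) = 4 := by linarith
  have e5 : (num 5 2 : ℚ) = 23 := by linarith
  exact ⟨by exact_mod_cast e4, by exact_mod_cast e5⟩

/-- The closed formula in terms of Catalan numbers, with `n = m + 4`. -/
theorem num_two_closed (m : ℕ) : 2 * (((m : ℚ) + 3) * (m + 4)) * num (m + 4) 2 =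
    (((m : ℚ) + 4) ^ 3 + 17 * ((m : ℚ) + 4) ^ 2 - 80 * ((m : ℚ) + 4) + 80) * (m + 1) *
      catalan (m + 1) := by
  induction m using Nat.twoStepInduction with
  | zero => rw [num_two_small.1]; norm_num [catalan_one]
  | one => rw [num_two_small.2]; norm_num [catalan_two]
  | more n h0 h1 =>
    rw [show n + 2 + 4 = n + 6 by ring, num_two_rec]
    have r1 := catalan_rec (n + 1)
    have r2 := catalan_rec (n + 2)
    have r3 := catalan_rec (n + 3)
    have r4 := catalan_rec (n + 4)
    push_cast at *
    simp only [add_assoc] at *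
    norm_num at *
    have k1 : (catalan (n + 2) : ℚ) = 2 * (2 * (n + 1) + 1) * catalan (n + 1) / (n + 3) := by
      field_simp; linarith
    have k2 : (catalan (n + 3) : ℚ) = 2 * (2 * (n + 2) + 1) * catalan (n + 2) / (n + 4) := by
      field_simp; linarith
    have k3 : (catalan (n + 4) : ℚ) = 2 * (2 * (n + 3) + 1) * catalan (n + 3) / (n + 5) := by
      field_simp; linarith
    have k4 : (catalan (n + 5) : ℚ) = 2 * (2 * (n + 4) + 1) * catalan (n + 4) / (n + 6) := by
      field_simp; linarith
    have d0 : (num (n + 4) 2 : ℚ) = (((n : ℚ) + 4) ^ 3 + 17 * ((n : ℚ) + 4) ^ 2 -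
        80 * ((n : ℚ) + 4) + 80) * (n + 1) * catalan (n + 1) / (2 * (((n : ℚ) + 3) * (n + 4))) := by
      rw [eq_div_iff (by positivity)]; linarith
    have d1 : (num (n + 5) 2 : ℚ) = (((n : ℚ) + 5) ^ 3 + 17 * ((n : ℚ) + 5) ^ 2 -
        80 * ((n : ℚ) + 5) + 80) * (n + 2) * catalan (n + 2) / (2 * (((n : ℚ) + 4) * (n + 5))) := by
      rw [eq_div_iff (by positivity)]; linarith
    rw [d0, d1, k4, k3, k2, k1]
    field_simp
    ring

end ClosedForm

end Occ132

theorem count_two_occ_132 (n : ℕ) (hn : 4 ≤ n) :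
    (Nat.card {π : Equiv.Perm (Fin n) // numOcc (Equiv.swap (1 : Fin 3) 2) π = 2} : ℚ) =
      ((n : ℚ) ^ 3 + 17 * (n : ℚ) ^ 2 - 80 * (n : ℚ) + 80) * (Nat.factorial (2 * n - 6) : ℚ) /
        ((Nat.factorial n : ℚ) * (Nat.factorial 2 : ℚ) * (Nat.factorial (n - 4) : ℚ)) := by
  obtain ⟨m, rfl⟩ := Nat.exists_eq_add_of_le' hn
  have h := Occ132.num_two_closed m
  have hf := Occ132.catalan_factorial (m + 1)
  rw [Occ132.card_eq_num, show 2 * (m + 4) - 6 = 2 * (m + 1) by omega, Nat.add_sub_cancel, ← hf,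
    eq_div_iff (by positivity)]
  simp only [Nat.factorial_succ, Nat.factorial_zero] at *
  push_cast at *
  linear_combination ((m + 2 : ℚ) * (m + 1) * m.factorial * m.factorial) * h
end
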